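/- arXiv:1908.04049 — 2 statements merged into one kernel-verified Lean document; each statement's English description precedes it below -/
import Mathlib

section
/- Let n be a positive integer and β a real number. For s > 0 define F_β(s) := ∫_{S^{n−1}} |s e₁ − σ|^{β−n} dσ, where the integral (valued in [0,∞]) is taken with respect to the surface measure on the unit sphere S^{n−1} of ℝⁿ and e₁ is the first standard basis vector. Then there exist constants c, C > 0 depending only on n and β such that: (1) if β < 1, then for all s > 0 with s ≠ 1, c (1+s)^{1−n} |1−s|^{β−1} ≤ F_β(s) ≤ C (1+s)^{1−n} |1−s|^{β−1}; (2) if β = 1, then for all s > 0 with s ≠ 1, c (1 + (n−1) max(0, log(1/|1−s|))) (1+s)^{1−n} ≤ F_β(s) ≤ C (1 + (n−1) max(0, log(1/|1−s|))) (1+s)^{1−n}; (3) if β > 1, then for all s > 0, c (1+s)^{β−n} ≤ F_β(s) ≤ C (1+s)^{β−n}. -/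
open MeasureTheory Metric

/-- The integral `F_β(s) = ∫_{S^{n-1}} |s e₁ - σ|^{β-n} dσ` over the unit sphere of `ℝⁿ`
with respect to the surface measure, valued in `[0,∞]`. -/
noncomputable def sphereIntegralF (n : ℕ) (hn : 0 < n) (β s : ℝ) : ENNReal :=
  ∫⁻ σ : sphere (0 : EuclideanSpace ℝ (Fin n)) 1,
    (‖s • EuclideanSpace.single (⟨0, hn⟩ : Fin n) (1 : ℝ) -
        (σ : EuclideanSpace ℝ (Fin n))‖₊ : ENNReal) ^ (β - (n : ℝ))
    ∂ (volume : Measure (EuclideanSpace ℝ (Fin n))).toSphere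

/-!
Up to constants, `‖s e - σ‖` is `(1 + s) * max D ‖σ - e‖` with `D = |1 - s| / (1 + s)`, so `F_β(s)`
is `(1 + s) ^ (β - n)` times the integral of `max D ‖σ - e‖ ^ (β - n)`. For `β ≥ n` the latter is
comparable to `1`. For `β < n` the layer cake formula reduces it to the measure of the balls of the
sphere, which is comparable to `r ^ (n - 1)` for `r ≤ 1`: the part of the shell `1 < ‖x‖ < 1 + r`
over a ball of radius `r` of the sphere contains a ball of the whole space of radius `r / 4` and is
contained in one of radius `2 r`. This leaves `1 + (n - β) * ∫_D^1 t ^ (β - 2) dt`, whose three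
regimes `β < 1`, `β = 1`, `β > 1` are those of the theorem.
-/

open Set Module

open scoped ENNReal Pointwise

/-- The relation `f ≍ g` on `S`: the two families bound each other up to positive constants
independent of `i ∈ S`. The constants are real, so neither bound can hold through a factor `∞`. -/
def ComparableOn {ι : Type*} (S : Set ι) (f g : ι → ℝ≥0∞) : Prop :=
  ∃ c C : ℝ, 0 < c ∧ 0 < C ∧
    ∀ i ∈ S, ENNReal.ofReal c * g i ≤ f i ∧ f i ≤ ENNReal.ofReal C * g i

namespace ComparableOn

variable {ι κ : Type*} {S : Set ι} {f g h : ι → ℝ≥0∞}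

theorem of_eqOn (hfg : EqOn f g S) : ComparableOn S f g :=
  ⟨1, 1, one_pos, one_pos, fun i hi => by simp [hfg hi]⟩

theorem symm (hfg : ComparableOn S f g) : ComparableOn S g f := by
  obtain ⟨c, C, hc, hC, hfg⟩ := hfg
  refine ⟨C⁻¹, c⁻¹, by positivity, by positivity, fun i hi => ?_⟩
  rw [ENNReal.ofReal_inv_of_pos hC, ENNReal.ofReal_inv_of_pos hc]
  exact ⟨(ENNReal.inv_mul_le_iff (by simpa) ENNReal.ofReal_ne_top).2 (hfg i hi).2,
    (ENNReal.mul_le_iff_le_inv (by simpa) ENNReal.ofReal_ne_top).1 (hfg i hi).1⟩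

theorem trans (hfg : ComparableOn S f g) (hgh : ComparableOn S g h) : ComparableOn S f h := by
  obtain ⟨c, C, hc, hC, hfg⟩ := hfg
  obtain ⟨c', C', hc', hC', hgh⟩ := hgh
  refine ⟨c * c', C * C', by positivity, mul_pos hC hC', fun i hi => ?_⟩
  rw [ENNReal.ofReal_mul hc.le, ENNReal.ofReal_mul hC.le, mul_assoc, mul_assoc]
  exact ⟨le_trans (by gcongr; exact (hgh i hi).1) (hfg i hi).1,
    (hfg i hi).2.trans (by gcongr; exact (hgh i hi).2)⟩

theorem comp (hfg : ComparableOn S f g) {φ : κ → ι} {U : Set κ} (hφ : MapsTo φ U S) :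
    ComparableOn U (f ∘ φ) (g ∘ φ) :=
  let ⟨c, C, hc, hC, hfg⟩ := hfg
  ⟨c, C, hc, hC, fun _ hk => hfg _ (hφ hk)⟩

theorem mul_left (hfg : ComparableOn S f g) (k : ι → ℝ≥0∞) :
    ComparableOn S (fun i => k i * f i) (fun i => k i * g i) := by
  obtain ⟨c, C, hc, hC, hfg⟩ := hfg
  refine ⟨c, C, hc, hC, fun i hi => ?_⟩
  rw [mul_left_comm, mul_left_comm (ENNReal.ofReal C)]
  exact ⟨mul_le_mul_right (hfg i hi).1 _, mul_le_mul_right (hfg i hi).2 _⟩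

theorem rpow (hfg : ComparableOn S f g) (p : ℝ) :
    ComparableOn S (fun i => f i ^ p) (fun i => g i ^ p) := by
  obtain ⟨c, C, hc, hC, hfg⟩ := hfg
  have mul_rpow {a : ℝ} (ha : 0 < a) (x : ℝ≥0∞) :
      ENNReal.ofReal (a ^ p) * x ^ p = (ENNReal.ofReal a * x) ^ p := by
    rw [← ENNReal.ofReal_rpow_of_pos ha, ENNReal.mul_rpow_eq_ite]
    simp [ha]
  rcases le_or_gt 0 p with hp | hp
  · refine ⟨c ^ p, C ^ p, by positivity, by positivity, fun i hi => ?_⟩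
    rw [mul_rpow hc, mul_rpow hC]
    exact ⟨ENNReal.rpow_le_rpow (hfg i hi).1 hp, ENNReal.rpow_le_rpow (hfg i hi).2 hp⟩
  · have anti {x y : ℝ≥0∞} (hxy : x ≤ y) : y ^ p ≤ x ^ p := by
      simpa only [ENNReal.rpow_neg, ENNReal.inv_le_inv] using
        ENNReal.rpow_le_rpow hxy (neg_nonneg.2 hp.le)
    refine ⟨C ^ p, c ^ p, by positivity, by positivity, fun i hi => ?_⟩
    rw [mul_rpow hc, mul_rpow hC]
    exact ⟨anti (hfg i hi).2, anti (hfg i hi).1⟩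

theorem setLIntegral {α : Type*} [MeasurableSpace α] (μ : Measure α) {A : ι → Set α}
    (hA : ∀ i, MeasurableSet (A i)) {F G : ι → α → ℝ≥0∞}
    (hFG : ComparableOn {p : ι × α | p.1 ∈ S ∧ p.2 ∈ A p.1} (fun p => F p.1 p.2)
      (fun p => G p.1 p.2)) :
    ComparableOn S (fun i => ∫⁻ x in A i, F i x ∂μ) (fun i => ∫⁻ x in A i, G i x ∂μ) := by
  obtain ⟨c, C, hc, hC, hFG⟩ := hFG
  refine ⟨c, C, hc, hC, fun i hi => ?_⟩
  rw [← lintegral_const_mul' _ _ ENNReal.ofReal_ne_top,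
    ← lintegral_const_mul' _ _ ENNReal.ofReal_ne_top]
  exact ⟨setLIntegral_mono' (hA i) fun x hx => (hFG (i, x) ⟨hi, hx⟩).1,
    setLIntegral_mono' (hA i) fun x hx => (hFG (i, x) ⟨hi, hx⟩).2⟩

theorem lintegral {α : Type*} [MeasurableSpace α] (μ : Measure α) {F G : ι → α → ℝ≥0∞}
    (hFG : ComparableOn {p : ι × α | p.1 ∈ S} (fun p => F p.1 p.2) (fun p => G p.1 p.2)) :
    ComparableOn S (fun i => ∫⁻ x, F i x ∂μ) (fun i => ∫⁻ x, G i x ∂μ) := by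
  simpa only [Measure.restrict_univ] using
    setLIntegral (S := S) μ (A := fun _ => univ) (fun _ => .univ) (by simpa using hFG)

end ComparableOn

section LayerCake

theorem setLIntegral_Ioi_mul_rpow_neg_sub_one {γ c : ℝ} (hγ : 0 < γ) (hc : 0 ≤ c) :
    ∫⁻ t in Ioi c, ENNReal.ofReal (γ * t ^ (-γ - 1)) = ENNReal.ofReal c ^ (-γ) := by
  have nonneg : 0 ≤ᵐ[volume.restrict (Ioi c)] fun t : ℝ => γ * t ^ (-γ - 1) := by
    filter_upwards [ae_restrict_mem measurableSet_Ioi] with t ht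
    have : 0 < t := hc.trans_lt ht
    positivity
  rcases hc.eq_or_lt with rfl | hc
  · rw [ENNReal.ofReal_zero, ENNReal.zero_rpow_of_neg (neg_lt_zero.2 hγ)]
    by_contra hfin
    refine not_integrableOn_Ioi_rpow (-γ - 1) ?_
    have := (lintegral_ofReal_ne_top_iff_integrable (by fun_prop) nonneg).1 hfin
    simpa [IntegrableOn, integrable_const_mul_iff, hγ.ne'] using this
  · have hγ' : -γ - 1 < -1 := by linarith
    rw [← ofReal_integral_eq_lintegral_ofReal ((integrableOn_Ioi_rpow_of_lt hγ' hc).const_mul γ)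
      nonneg, integral_const_mul, integral_Ioi_rpow_of_lt hγ' hc, ENNReal.ofReal_rpow_of_pos hc]
    congr 1
    field_simp
    ring_nf
    field_simp

theorem lintegral_max_rpow_neg_eq_setLIntegral_meas_lt {α : Type*} [MeasurableSpace α]
    (ν : Measure α) [SFinite ν] {f : α → ℝ} (hf : Measurable f) {γ D : ℝ} (hγ : 0 < γ)
    (hD : 0 ≤ D) :
    ∫⁻ x, ENNReal.ofReal (max D (f x)) ^ (-γ) ∂ν =
      ∫⁻ t in Ioi D, ENNReal.ofReal (γ * t ^ (-γ - 1)) * ν {x | f x < t} := by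
  set w : ℝ → ℝ≥0∞ := fun t => ENNReal.ofReal (γ * t ^ (-γ - 1))
  have hw : Measurable w := by fun_prop
  have hlt : MeasurableSet {p : α × ℝ | f p.1 < p.2} :=
    measurableSet_lt (hf.comp measurable_fst) measurable_snd
  calc ∫⁻ x, ENNReal.ofReal (max D (f x)) ^ (-γ) ∂ν
      = ∫⁻ x, (∫⁻ t in Ioi D, {p : α × ℝ | f p.1 < p.2}.indicator (fun p => w p.2) (x, t)) ∂ν := by
        refine lintegral_congr fun x => ?_
        rw [← setLIntegral_Ioi_mul_rpow_neg_sub_one hγ (hD.trans (le_max_left _ _)),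
          ← Ioi_inter_Ioi, inter_comm, ← setLIntegral_indicator measurableSet_Ioi]
        rfl
    _ = ∫⁻ t in Ioi D, ∫⁻ x, {p : α × ℝ | f p.1 < p.2}.indicator (fun p => w p.2) (x, t) ∂ν :=
        lintegral_lintegral_swap
          ((hw.comp measurable_snd).indicator hlt).aemeasurable
    _ = ∫⁻ t in Ioi D, w t * ν {x | f x < t} :=
        lintegral_congr fun t =>
          lintegral_indicator_const (measurableSet_lt hf measurable_const) (w t)

end LayerCake

section Ahlfors

variable {X : Type*} [PseudoMetricSpace X] [MeasurableSpace X] {ν : Measure X} {d : ℝ}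

/-- Ahlfors regularity of exponent `d` at scales at most `1`: the balls of radius `r ≤ 1` have
measure comparable to `r ^ d`, uniformly in the centre. -/
def IsAhlforsRegular (ν : Measure X) (d : ℝ) : Prop :=
  ComparableOn {q : X × ℝ | q.2 ∈ Ioc 0 1} (fun q => ν (ball q.1 q.2))
    fun q => ENNReal.ofReal (q.2 ^ d)

theorem IsAhlforsRegular.comparableOn_measure_ball [IsFiniteMeasure ν]
    (hν : IsAhlforsRegular ν d) :
    ComparableOn {q : X × ℝ | 0 < q.2} (fun q => ν (ball q.1 q.2))
      (fun q => ENNReal.ofReal (min q.2 1 ^ d)) := by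
  obtain ⟨c, C, hc, hC, hν⟩ := hν
  have hunit (x : X) : ENNReal.ofReal c ≤ ν (ball x 1) := by simpa using (hν (x, 1) (by simp)).1
  refine ⟨c, max C (ν.real univ), hc, lt_max_of_lt_left hC, ?_⟩
  rintro ⟨x, r⟩ (hr : 0 < r)
  dsimp only
  rw [ENNReal.ofReal_max, ofReal_measureReal]
  rcases le_total r 1 with hr1 | hr1
  · have hxr := hν (x, r) ⟨hr, hr1⟩
    rw [min_eq_left hr1]
    exact ⟨hxr.1, hxr.2.trans (by gcongr; exact le_max_left _ _)⟩
  · simp only [min_eq_right hr1, Real.one_rpow, ENNReal.ofReal_one, mul_one]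
    exact ⟨(hunit x).trans (measure_mono (ball_subset_ball hr1)),
      (measure_mono (subset_univ _)).trans (le_max_right _ _)⟩

/-- The size of the integral of `max D (dist y x) ^ (-γ)` against an Ahlfors regular measure of
exponent `b + γ`. For `γ ≤ 0` the second summand is `0`, as `ENNReal.ofReal` truncates. -/
noncomputable def rieszProfile (γ b D : ℝ) : ℝ≥0∞ :=
  1 + ENNReal.ofReal γ * ∫⁻ t in Ioc D 1, ENNReal.ofReal (t ^ (b - 1))

theorem setLIntegral_Ioi_mul_min_rpow {γ D : ℝ} (d : ℝ) (hγ : 0 < γ) (hD : D ∈ Icc (0 : ℝ) 1) :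
    ∫⁻ t in Ioi D, ENNReal.ofReal (γ * t ^ (-γ - 1)) * ENNReal.ofReal (min t 1 ^ d) =
      rieszProfile γ (d - γ) D := by
  have tail : ∫⁻ t in Ioi (1 : ℝ),
      ENNReal.ofReal (γ * t ^ (-γ - 1)) * ENNReal.ofReal (min t 1 ^ d) = 1 := by
    rw [setLIntegral_congr_fun (g := fun t : ℝ => ENNReal.ofReal (γ * t ^ (-γ - 1)))
      measurableSet_Ioi fun t (ht : 1 < t) => by simp [min_eq_right ht.le],
      setLIntegral_Ioi_mul_rpow_neg_sub_one hγ zero_le_one]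
    simp
  have head : EqOn
      (fun t : ℝ => ENNReal.ofReal (γ * t ^ (-γ - 1)) * ENNReal.ofReal (min t 1 ^ d))
      (fun t => ENNReal.ofReal γ * ENNReal.ofReal (t ^ (d - γ - 1))) (Ioc D 1) := by
    rintro t ⟨hDt, ht1⟩
    have ht : 0 < t := hD.1.trans_lt hDt
    have hpow : t ^ (-γ - 1) * t ^ d = t ^ (d - γ - 1) := by
      rw [← Real.rpow_add ht]
      ring_nf
    dsimp only
    rw [min_eq_left ht1, ← ENNReal.ofReal_mul (by positivity), mul_assoc, hpow,
      ENNReal.ofReal_mul hγ.le]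
  rw [← Ioc_union_Ioi_eq_Ioi hD.2, lintegral_union measurableSet_Ioi
    (Ioc_disjoint_Ioi le_rfl), tail, setLIntegral_congr_fun measurableSet_Ioc head,
    lintegral_const_mul' _ _ ENNReal.ofReal_ne_top, add_comm, rieszProfile]

theorem IsAhlforsRegular.lintegral_max_dist_rpow_neg [OpensMeasurableSpace X]
    [IsFiniteMeasure ν] (hν : IsAhlforsRegular ν d) {γ : ℝ} (hγ : 0 < γ) :
    ComparableOn {q : X × ℝ | q.2 ∈ Icc 0 1}
      (fun q => ∫⁻ y, ENNReal.ofReal (max q.2 (dist y q.1)) ^ (-γ) ∂ν)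
      (fun q => rieszProfile γ (d - γ) q.2) := by
  have layerCake (q : X × ℝ) (hq : q.2 ∈ Icc 0 1) :
      ∫⁻ y, ENNReal.ofReal (max q.2 (dist y q.1)) ^ (-γ) ∂ν =
        ∫⁻ t in Ioi q.2, ENNReal.ofReal (γ * t ^ (-γ - 1)) * ν (ball q.1 t) :=
    lintegral_max_rpow_neg_eq_setLIntegral_meas_lt ν (by fun_prop) hγ hq.1
  have balls : ComparableOn
      {p : (X × ℝ) × ℝ | p.1 ∈ {q : X × ℝ | q.2 ∈ Icc 0 1} ∧ p.2 ∈ Ioi p.1.2}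
      (fun p => ν (ball p.1.1 p.2)) (fun p => ENNReal.ofReal (min p.2 1 ^ d)) :=
    hν.comparableOn_measure_ball.comp (φ := fun p : (X × ℝ) × ℝ => (p.1.1, p.2))
      fun p hp => hp.1.1.trans_lt hp.2
  exact (ComparableOn.of_eqOn layerCake).trans <|
    ((balls.mul_left fun p => ENNReal.ofReal (γ * p.2 ^ (-γ - 1))).setLIntegral volume
      fun _ => measurableSet_Ioi).trans <|
    .of_eqOn fun q hq => setLIntegral_Ioi_mul_min_rpow d hγ hq

end Ahlfors

section Profile

variable {γ b D : ℝ}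

theorem setLIntegral_Ioc_rpow {r : ℝ} (hD : D ∈ Icc (0 : ℝ) 1) (hr : -1 < r ∨ 0 < D) :
    ∫⁻ t in Ioc D 1, ENNReal.ofReal (t ^ r) = ENNReal.ofReal (∫ t in D..1, t ^ r) := by
  have hint : IntervalIntegrable (fun t : ℝ => t ^ r) volume D 1 :=
    hr.elim intervalIntegral.intervalIntegrable_rpow' fun hD0 =>
      intervalIntegral.intervalIntegrable_rpow (.inr (notMem_uIcc_of_lt hD0 one_pos))
  rw [intervalIntegral.integral_of_le hD.2, ofReal_integral_eq_lintegral_ofReal hint.1]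
  filter_upwards [ae_restrict_mem measurableSet_Ioc] with t ht
  exact Real.rpow_nonneg (hD.1.trans ht.1.le) r

theorem rieszProfile_comparableOn_rpow (hγ : 0 < γ) (hb : b < 0) :
    ComparableOn (Ioc 0 1) (rieszProfile γ b) (fun D => ENNReal.ofReal (D ^ b)) := by
  set a := γ / -b
  have ha : 0 < a := div_pos hγ (neg_pos.2 hb)
  refine ⟨min 1 a, max 1 a, by positivity, by positivity, fun D hD => ?_⟩
  have hx : 1 ≤ D ^ b := Real.one_le_rpow_of_pos_of_le_one_of_nonpos hD.1 hD.2 hb.le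
  have hint : ∫ t in D..1, t ^ (b - 1) = (D ^ b - 1) / -b := by
    rw [integral_rpow (.inr ⟨by linarith, notMem_uIcc_of_lt hD.1 one_pos⟩), sub_add_cancel,
      Real.one_rpow, div_neg, ← neg_div, neg_sub]
  have hval : rieszProfile γ b D = ENNReal.ofReal (1 + a * (D ^ b - 1)) := by
    rw [rieszProfile, setLIntegral_Ioc_rpow ⟨hD.1.le, hD.2⟩ (.inr hD.1), hint,
      ← ENNReal.ofReal_mul hγ.le, mul_div_left_comm, mul_comm,
      ENNReal.ofReal_add zero_le_one (mul_nonneg ha.le (sub_nonneg.2 hx)), ENNReal.ofReal_one]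
  rw [hval, ← ENNReal.ofReal_mul (by positivity), ← ENNReal.ofReal_mul (by positivity)]
  constructor <;> apply ENNReal.ofReal_le_ofReal
  · nlinarith [min_le_left 1 a, min_le_right 1 a]
  · nlinarith [le_max_left 1 a, le_max_right 1 a]

theorem rieszProfile_zero (hγ : 0 ≤ γ) (hD : D ∈ Ioc (0 : ℝ) 1) :
    rieszProfile γ 0 D = ENNReal.ofReal (1 + γ * Real.log (1 / D)) := by
  have hlog : 0 ≤ Real.log (1 / D) := Real.log_nonneg (one_le_one_div hD.1 hD.2)
  rw [rieszProfile, setLIntegral_Ioc_rpow ⟨hD.1.le, hD.2⟩ (.inr hD.1), zero_sub,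
    ENNReal.ofReal_add zero_le_one (by positivity), ENNReal.ofReal_mul hγ, ENNReal.ofReal_one]
  simp only [Real.rpow_neg_one, integral_inv_of_pos hD.1 one_pos]

theorem rieszProfile_comparableOn_one (γ : ℝ) (hb : 0 < b) :
    ComparableOn (Icc 0 1) (rieszProfile γ b) (fun _ => 1) := by
  refine ⟨1, 1 + max γ 0 * b⁻¹, one_pos, by positivity, fun D hD => ?_⟩
  have hpow : 0 ≤ D ^ b := Real.rpow_nonneg hD.1 b
  rw [mul_one, mul_one, ENNReal.ofReal_one, ENNReal.ofReal_add zero_le_one (by positivity),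
    ENNReal.ofReal_mul (le_max_right _ _), ENNReal.ofReal_one, rieszProfile,
    setLIntegral_Ioc_rpow hD (.inl (by linarith)), integral_rpow (.inl (by linarith))]
  refine ⟨le_self_add, ?_⟩
  gcongr
  · exact le_max_left _ _
  · rw [sub_add_cancel, Real.one_rpow, ← one_div]
    gcongr
    linarith

end Profile

section Sphere

variable {E : Type*} [NormedAddCommGroup E] [NormedSpace ℝ E]

/-- The distance from `s` to `1` relative to `1 + s`. Up to constants, the distance from `s • e` to
a point `σ` of the unit sphere is `(1 + s) * max (relGap s) (dist σ e)`. -/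
noncomputable def relGap (s : ℝ) : ℝ :=
  |1 - s| / (1 + s)

theorem relGap_mem_Icc {s : ℝ} (hs : 0 ≤ s) : relGap s ∈ Icc 0 1 := by
  refine ⟨by unfold relGap; positivity, (div_le_one (by positivity)).2 ?_⟩
  exact abs_le.2 ⟨by linarith, by linarith⟩

theorem relGap_pos {s : ℝ} (hs : 0 ≤ s) (hs1 : s ≠ 1) : 0 < relGap s :=
  div_pos (abs_pos.2 (sub_ne_zero.2 hs1.symm)) (by positivity)

theorem one_add_mul_relGap {s : ℝ} (hs : 0 ≤ s) : (1 + s) * relGap s = |1 - s| :=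
  mul_div_cancel₀ _ (by positivity)

section Kernel

variable (e σ : sphere (0 : E) 1)

theorem norm_smul_sub_le (s : ℝ) : ‖s • (e : E) - σ‖ ≤ |1 - s| + dist σ e :=
  calc ‖s • (e : E) - σ‖ = ‖((e : E) - σ) - (1 - s) • (e : E)‖ := by congr 1; module
    _ ≤ ‖(e : E) - σ‖ + ‖(1 - s) • (e : E)‖ := norm_sub_le _ _
    _ = |1 - s| + dist σ e := by
      rw [norm_smul, norm_eq_of_mem_sphere, mul_one, Real.norm_eq_abs, add_comm, dist_comm,
        Subtype.dist_eq, dist_eq_norm]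

theorem abs_one_sub_le_norm_smul_sub {s : ℝ} (hs : 0 ≤ s) : |1 - s| ≤ ‖s • (e : E) - σ‖ := by
  have := abs_norm_sub_norm_le (s • (e : E)) σ
  rwa [norm_smul, norm_eq_of_mem_sphere, norm_eq_of_mem_sphere, mul_one,
    Real.norm_of_nonneg hs, abs_sub_comm] at this

theorem one_add_mul_dist_le_norm_smul_sub {s : ℝ} (hs : 0 ≤ s) :
    (1 + s) * dist σ e ≤ 4 * ‖s • (e : E) - σ‖ := by
  have hgap := abs_one_sub_le_norm_smul_sub e σ hs
  have hdist : dist σ e = ‖(e : E) - σ‖ := by rw [dist_comm, Subtype.dist_eq, dist_eq_norm]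
  have far : dist σ e ≤ ‖s • (e : E) - σ‖ + |1 - s| :=
    calc dist σ e = ‖(s • (e : E) - σ) + (1 - s) • (e : E)‖ := by
          rw [hdist]; congr 1; module
      _ ≤ ‖s • (e : E) - σ‖ + ‖(1 - s) • (e : E)‖ := norm_add_le _ _
      _ = ‖s • (e : E) - σ‖ + |1 - s| := by
        rw [norm_smul, norm_eq_of_mem_sphere, mul_one, Real.norm_eq_abs]
  have farScaled : s * dist σ e ≤ ‖s • (e : E) - σ‖ + |1 - s| :=
    calc s * dist σ e = ‖(s • (e : E) - σ) + (1 - s) • (σ : E)‖ := by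
          rw [hdist, ← Real.norm_of_nonneg hs, ← norm_smul, Real.norm_of_nonneg hs]
          congr 1; module
      _ ≤ ‖s • (e : E) - σ‖ + ‖(1 - s) • (σ : E)‖ := norm_add_le _ _
      _ = ‖s • (e : E) - σ‖ + |1 - s| := by
        rw [norm_smul, norm_eq_of_mem_sphere, mul_one, Real.norm_eq_abs]
  linarith

theorem comparableOn_enorm_smul_sub :
    ComparableOn {q : (sphere (0 : E) 1 × ℝ) × sphere (0 : E) 1 | 0 ≤ q.1.2}
      (fun q => ‖q.1.2 • (q.1.1 : E) - q.2‖ₑ)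
      (fun q => ENNReal.ofReal (1 + q.1.2) *
        ENNReal.ofReal (max (relGap q.1.2) (dist q.2 q.1.1))) := by
  refine ⟨1 / 4, 2, by norm_num, by norm_num, ?_⟩
  rintro ⟨⟨e, s⟩, σ⟩ (hs : 0 ≤ s)
  have hs1 : 0 ≤ 1 + s := by positivity
  have hdist : dist σ e ≤ (1 + s) * dist σ e := le_mul_of_one_le_left dist_nonneg (by linarith)
  dsimp only
  rw [← ENNReal.ofReal_mul hs1, mul_max_of_nonneg _ _ hs1, one_add_mul_relGap hs, ← ofReal_norm,
    ← ENNReal.ofReal_mul (by norm_num), ← ENNReal.ofReal_mul (by norm_num)]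
  constructor <;> apply ENNReal.ofReal_le_ofReal
  · have hgap : |1 - s| ≤ 4 * ‖s • (e : E) - σ‖ := by
      linarith [abs_one_sub_le_norm_smul_sub e σ hs, norm_nonneg (s • (e : E) - σ)]
    linarith [max_le hgap (one_add_mul_dist_le_norm_smul_sub e σ hs)]
  · linarith [norm_smul_sub_le e σ s, le_max_left |1 - s| ((1 + s) * dist σ e),
      le_max_right |1 - s| ((1 + s) * dist σ e)]

theorem comparableOn_lintegral_enorm_smul_sub_rpow [MeasurableSpace E]
    (ν : Measure (sphere (0 : E) 1)) (p : ℝ) :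
    ComparableOn {q : sphere (0 : E) 1 × ℝ | 0 ≤ q.2}
      (fun q => ∫⁻ σ, ‖q.2 • (q.1 : E) - σ‖ₑ ^ p ∂ν)
      (fun q => ENNReal.ofReal ((1 + q.2) ^ p) *
        ∫⁻ σ, ENNReal.ofReal (max (relGap q.2) (dist σ q.1)) ^ p ∂ν) := by
  refine ComparableOn.trans (ComparableOn.lintegral ν (G := fun q σ =>
    (ENNReal.ofReal (1 + q.2) * ENNReal.ofReal (max (relGap q.2) (dist σ q.1))) ^ p)
    (comparableOn_enorm_smul_sub.rpow p)) (.of_eqOn ?_)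
  rintro ⟨e, s⟩ (hs : 0 ≤ s)
  have hs1 : 0 < 1 + s := by positivity
  dsimp only
  rw [← lintegral_const_mul' _ _ ENNReal.ofReal_ne_top]
  refine lintegral_congr fun σ => ?_
  rw [← ENNReal.ofReal_rpow_of_pos hs1, ENNReal.mul_rpow_eq_ite, if_neg (by simp)]

end Kernel

section Regularity

variable (e : sphere (0 : E) 1) {r : ℝ}

theorem ball_subset_Ioo_smul_ball :
    ball ((1 + r / 4) • (e : E)) (r / 4) ⊆ Ioo 1 (1 + r) • ((↑) '' ball e r : Set E) := by
  intro x hx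
  rw [mem_ball_iff_norm] at hx
  have hr : 0 < r := by linarith [norm_nonneg (x - (1 + r / 4) • (e : E))]
  have hcentre : ‖(1 + r / 4) • (e : E)‖ = 1 + r / 4 := by
    rw [norm_smul, norm_eq_of_mem_sphere, mul_one, Real.norm_of_nonneg (by positivity)]
  have hnorm : |‖x‖ - (1 + r / 4)| < r / 4 := by
    simpa only [hcentre] using (abs_norm_sub_norm_le x ((1 + r / 4) • (e : E))).trans_lt hx
  obtain ⟨hlow, hhigh⟩ := abs_lt.1 hnorm
  have hx1 : 1 < ‖x‖ := by linarith
  have hx0 : 0 < ‖x‖ := one_pos.trans hx1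
  have hclose : ‖x - ‖x‖ • (e : E)‖ < r :=
    calc ‖x - ‖x‖ • (e : E)‖
        = ‖(x - (1 + r / 4) • (e : E)) - (‖x‖ - (1 + r / 4)) • (e : E)‖ := by congr 1; module
      _ ≤ ‖x - (1 + r / 4) • (e : E)‖ + ‖(‖x‖ - (1 + r / 4)) • (e : E)‖ := norm_sub_le _ _
      _ < r := by
        rw [norm_smul, norm_eq_of_mem_sphere, mul_one, Real.norm_eq_abs]
        linarith
  refine ⟨‖x‖, ⟨hx1, by linarith⟩, ‖x‖⁻¹ • x, ⟨⟨‖x‖⁻¹ • x, ?_⟩, ?_, rfl⟩,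
    smul_inv_smul₀ hx0.ne' x⟩
  · simp [norm_smul, hx0.ne']
  · have hscale : ‖x‖⁻¹ • x - (e : E) = ‖x‖⁻¹ • (x - ‖x‖ • (e : E)) := by
      rw [smul_sub, inv_smul_smul₀ hx0.ne']
    rw [mem_ball, Subtype.dist_eq, dist_eq_norm, hscale, norm_smul, norm_inv, norm_norm]
    exact (mul_le_of_le_one_left (norm_nonneg _) (inv_le_one_of_one_le₀ hx1.le)).trans_lt hclose

theorem Ioo_smul_ball_subset_ball :
    Ioo 1 (1 + r) • ((↑) '' ball e r : Set E) ⊆ ball (e : E) (2 * r) := by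
  rintro _ ⟨t, ⟨ht1, htr⟩, _, ⟨σ, hσ, rfl⟩, rfl⟩
  rw [mem_ball, Subtype.dist_eq, dist_eq_norm] at hσ
  rw [mem_ball, dist_eq_norm]
  calc ‖t • (σ : E) - e‖ = ‖(t - 1) • (σ : E) + (σ - e)‖ := by congr 1; module
    _ ≤ ‖(t - 1) • (σ : E)‖ + ‖(σ : E) - e‖ := norm_add_le _ _
    _ < 2 * r := by
      rw [norm_smul, norm_eq_of_mem_sphere, mul_one, Real.norm_of_nonneg (by linarith)]
      linarith

theorem comparableOn_setLIntegral_Ioo_pow (m : ℕ) :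
    ComparableOn (Ioc (0 : ℝ) 1) (fun r => ∫⁻ t in Ioo 1 (1 + r), ENNReal.ofReal (t ^ m))
      ENNReal.ofReal := by
  have density : ComparableOn {p : ℝ × ℝ | p.1 ∈ Ioc 0 1 ∧ p.2 ∈ Ioo 1 (1 + p.1)}
      (fun p => ENNReal.ofReal (p.2 ^ m)) (fun _ => 1) := by
    refine ⟨1, 2 ^ m, one_pos, by positivity, fun ⟨r, t⟩ ⟨hr, ht⟩ => ?_⟩
    simp only [mem_Ioc, mem_Ioo, ENNReal.ofReal_one, mul_one] at hr ht ⊢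
    exact ⟨ENNReal.one_le_ofReal.2 (one_le_pow₀ ht.1.le),
      ENNReal.ofReal_le_ofReal (pow_le_pow_left₀ (by linarith) (by linarith) m)⟩
  exact (ComparableOn.setLIntegral volume (fun _ => measurableSet_Ioo) (G := fun _ _ => 1)
    density).trans (.of_eqOn fun r _ => by simp)

variable [MeasurableSpace E] [BorelSpace E] [FiniteDimensional ℝ E] (μ : Measure E)
  [μ.IsAddHaarMeasure]

theorem measure_smul_image_sphere {A : Set (sphere (0 : E) 1)} (hA : MeasurableSet A)
    {I : Set ℝ} (hI : MeasurableSet I) (hI0 : I ⊆ Ioi 0) :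
    μ (I • ((↑) '' A : Set E)) =
      μ.toSphere A * ∫⁻ t in I, ENNReal.ofReal (t ^ (finrank ℝ E - 1)) := by
  have polar : I • ((↑) '' A : Set E) =
      (↑) '' (homeomorphUnitSphereProd E ⁻¹' (A ×ˢ ((↑) ⁻¹' I))) := by
    rw [← Homeomorph.image_symm, image_image]
    ext x
    constructor
    · rintro ⟨t, ht, _, ⟨σ, hσ, rfl⟩, rfl⟩
      exact ⟨(σ, ⟨t, hI0 ht⟩), ⟨hσ, ht⟩, rfl⟩
    · rintro ⟨⟨σ, t⟩, ⟨hσ, ht⟩, rfl⟩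
      exact smul_mem_smul ht (mem_image_of_mem _ hσ)
  have hI' : MeasurableSet ((↑) ⁻¹' I : Set (Ioi (0 : ℝ))) := measurable_subtype_coe hI
  rw [polar, ← comap_subtype_coe_apply (measurableSet_singleton _).compl,
    μ.measurePreserving_homeomorphUnitSphereProd.measure_preimage (hA.prod hI').nullMeasurableSet,
    Measure.prod_prod, Measure.volumeIoiPow, withDensity_apply _ hI',
    setLIntegral_subtype measurableSet_Ioi _ fun t : ℝ => ENNReal.ofReal (t ^ (finrank ℝ E - 1)),
    Subtype.image_preimage_coe, inter_eq_right.2 hI0]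

theorem comparableOn_measure_Ioo_smul_ball :
    ComparableOn {q : sphere (0 : E) 1 × ℝ | q.2 ∈ Ioc 0 1}
      (fun q => μ (Ioo 1 (1 + q.2) • ((↑) '' ball q.1 q.2 : Set E)))
      (fun q => ENNReal.ofReal (q.2 ^ finrank ℝ E)) := by
  set n := finrank ℝ E
  set V := μ.real (ball 0 1)
  have hV : 0 < V := ENNReal.toReal_pos (measure_ball_pos μ 0 one_pos).ne' measure_ball_lt_top.ne
  have measure_ball (x : E) {a r : ℝ} (ha : 0 < a) (hr : 0 < r) :
      μ (ball x (a * r)) = ENNReal.ofReal (a ^ n * V) * ENNReal.ofReal (r ^ n) := by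
    rw [μ.addHaar_ball_of_pos x (by positivity), ← ofReal_measureReal,
      ← ENNReal.ofReal_mul (by positivity), ← ENNReal.ofReal_mul (by positivity)]
    congr 1
    ring
  refine ⟨(1 / 4) ^ n * V, 2 ^ n * V, by positivity, by positivity, fun ⟨e, r⟩ ⟨hr, _⟩ => ?_⟩
  dsimp only at hr ⊢
  rw [← measure_ball ((1 + r / 4) • (e : E)) (by norm_num) hr,
    ← measure_ball (e : E) (by norm_num) hr, one_div_mul_eq_div]
  exact ⟨measure_mono (ball_subset_Ioo_smul_ball e), measure_mono (Ioo_smul_ball_subset_ball e)⟩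

theorem isAhlforsRegular_toSphere : IsAhlforsRegular μ.toSphere (finrank ℝ E - 1 : ℝ) := by
  set S : Set (sphere (0 : E) 1 × ℝ) := {q | q.2 ∈ Ioc 0 1}
  have shell : ComparableOn S
      (fun q => μ (Ioo 1 (1 + q.2) • ((↑) '' ball q.1 q.2 : Set E)))
      (fun q => μ.toSphere (ball q.1 q.2) * ENNReal.ofReal q.2) :=
    (ComparableOn.of_eqOn fun q _ => measure_smul_image_sphere μ isOpen_ball.measurableSet
      measurableSet_Ioo fun t ht => one_pos.trans ht.1).trans <|
    ((comparableOn_setLIntegral_Ioo_pow _).comp (φ := Prod.snd) fun q hq => hq).mul_left _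
  have scaled := (shell.symm.trans (comparableOn_measure_Ioo_smul_ball μ)).mul_left
    fun q => (ENNReal.ofReal q.2)⁻¹
  refine (ComparableOn.of_eqOn fun q hq => ?_).trans (scaled.trans (.of_eqOn fun q hq => ?_))
  · rw [mul_left_comm, ENNReal.inv_mul_cancel (by simpa using hq.1) ENNReal.ofReal_ne_top, mul_one]
  · have hq0 : 0 < q.2 := hq.1
    rw [← ENNReal.ofReal_inv_of_pos hq0, ← ENNReal.ofReal_mul (by positivity),
      Real.rpow_sub_one hq0.ne', Real.rpow_natCast, div_eq_inv_mul]

end Regularity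

section Potential

variable [MeasurableSpace E] [BorelSpace E] [FiniteDimensional ℝ E] (μ : Measure E)
  [μ.IsAddHaarMeasure]

theorem comparableOn_lintegral_max_dist_rpow_of_nonneg {p : ℝ} (hp : 0 ≤ p) :
    ComparableOn {q : sphere (0 : E) 1 × ℝ | q.2 ∈ Icc 0 1}
      (fun q => ∫⁻ σ, ENNReal.ofReal (max q.2 (dist σ q.1)) ^ p ∂μ.toSphere) (fun _ => 1) := by
  obtain ⟨c, _, hc, _, hreg⟩ := isAhlforsRegular_toSphere μ
  have hunit (e : sphere (0 : E) 1) : ENNReal.ofReal c ≤ μ.toSphere (ball e 1) := by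
    simpa using (hreg (e, 1) (by simp)).1
  have hdist (e σ : sphere (0 : E) 1) : dist σ e ≤ 2 := by
    have := norm_sub_le (σ : E) e
    rw [norm_eq_of_mem_sphere, norm_eq_of_mem_sphere, ← dist_eq_norm] at this
    rw [Subtype.dist_eq]; linarith
  have hantipode (e : sphere (0 : E) 1) : dist (-e) e = 2 := by
    rw [Subtype.dist_eq, dist_eq_norm, coe_neg_sphere, ← neg_add', norm_neg, ← two_smul ℝ,
      norm_smul, norm_eq_of_mem_sphere, mul_one, Real.norm_two]
  refine ⟨c, 2 ^ p * μ.toSphere.real univ + 1, hc, by positivity, fun ⟨e, D⟩ hD => ?_⟩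
  simp only [mul_one]
  constructor
  · have hfar : ∀ σ ∈ ball (-e) 1, 1 ≤ ENNReal.ofReal (max D (dist σ e)) ^ p := by
      intro σ hσ
      have : 1 ≤ dist σ e := by
        linarith [dist_triangle_left (-e) e σ, hantipode e, mem_ball.1 hσ]
      simpa only [ENNReal.one_rpow] using
        ENNReal.rpow_le_rpow (ENNReal.one_le_ofReal.2 (le_max_of_le_right this)) hp
    calc ENNReal.ofReal c ≤ μ.toSphere (ball (-e) 1) := hunit (-e)
      _ = ∫⁻ _ in ball (-e) 1, 1 ∂μ.toSphere := setLIntegral_one _ |>.symm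
      _ ≤ ∫⁻ σ in ball (-e) 1, ENNReal.ofReal (max D (dist σ e)) ^ p ∂μ.toSphere :=
        setLIntegral_mono' isOpen_ball.measurableSet hfar
      _ ≤ ∫⁻ σ, ENNReal.ofReal (max D (dist σ e)) ^ p ∂μ.toSphere := setLIntegral_le_lintegral _ _
  · calc ∫⁻ σ, ENNReal.ofReal (max D (dist σ e)) ^ p ∂μ.toSphere
        ≤ ∫⁻ _, ENNReal.ofReal 2 ^ p ∂μ.toSphere := lintegral_mono fun σ => by
          gcongr; exact max_le (by linarith [show D ≤ 1 from hD.2]) (hdist e σ)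
      _ = ENNReal.ofReal (2 ^ p * μ.toSphere.real univ) := by
        rw [lintegral_const, ENNReal.ofReal_rpow_of_pos two_pos,
          ENNReal.ofReal_mul (by positivity), ofReal_measureReal]
      _ ≤ ENNReal.ofReal (2 ^ p * μ.toSphere.real univ + 1) :=
        ENNReal.ofReal_le_ofReal (by linarith)

theorem comparableOn_lintegral_max_dist_rpow (p : ℝ) :
    ComparableOn {q : sphere (0 : E) 1 × ℝ | q.2 ∈ Icc 0 1}
      (fun q => ∫⁻ σ, ENNReal.ofReal (max q.2 (dist σ q.1)) ^ p ∂μ.toSphere)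
      (fun q => rieszProfile (-p) (finrank ℝ E - 1 + p) q.2) := by
  rcases lt_or_ge p 0 with hp | hp
  · simpa using (isAhlforsRegular_toSphere μ).lintegral_max_dist_rpow_neg (neg_pos.2 hp)
  · refine (comparableOn_lintegral_max_dist_rpow_of_nonneg μ hp).trans (.of_eqOn fun q _ => ?_)
    simp [rieszProfile, ENNReal.ofReal_of_nonpos (neg_nonpos.2 hp)]

/-- The integral of the kernel `‖x - σ‖ ^ (β - dim E)` over the unit sphere of `E`, at the point
`x` at distance `s` from `0` in the direction `e`. -/
noncomputable def sphereRieszPotential (β : ℝ) (e : sphere (0 : E) 1) (s : ℝ) : ℝ≥0∞ :=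
  ∫⁻ σ, ‖s • (e : E) - σ‖ₑ ^ (β - finrank ℝ E) ∂μ.toSphere

theorem sphereRieszPotential_comparableOn (β : ℝ) :
    ComparableOn {q : sphere (0 : E) 1 × ℝ | 0 ≤ q.2} (fun q => sphereRieszPotential μ β q.1 q.2)
      (fun q => ENNReal.ofReal ((1 + q.2) ^ (β - finrank ℝ E)) *
        rieszProfile (finrank ℝ E - β) (β - 1) (relGap q.2)) := by
  have hprofile := comparableOn_lintegral_max_dist_rpow μ (β - finrank ℝ E)
  rw [neg_sub, show (finrank ℝ E - 1 + (β - finrank ℝ E) : ℝ) = β - 1 by ring] at hprofile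
  exact (comparableOn_lintegral_enorm_smul_sub_rpow μ.toSphere _).trans <|
    (hprofile.comp (φ := fun q : sphere (0 : E) 1 × ℝ => (q.1, relGap q.2))
      fun q hq => relGap_mem_Icc hq).mul_left _

end Potential

end Sphere

section Asymptotics

theorem max_zero_log_le_log_inv_relGap {s : ℝ} (hs : 0 ≤ s) (hs1 : s ≠ 1) :
    max 0 (Real.log (1 / |1 - s|)) ≤ Real.log (1 / relGap s) := by
  have hgap : 0 < |1 - s| := abs_pos.2 (sub_ne_zero.2 hs1.symm)
  have hD := relGap_pos hs hs1
  refine max_le (Real.log_nonneg (one_le_one_div hD (relGap_mem_Icc hs).2)) ?_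
  exact Real.log_le_log (by positivity)
    (one_div_le_one_div_of_le hD (div_le_self hgap.le (by linarith)))

theorem log_inv_relGap_le {s : ℝ} (hs : 0 ≤ s) (hs1 : s ≠ 1) :
    Real.log (1 / relGap s) ≤ Real.log 3 + max 0 (Real.log (1 / |1 - s|)) := by
  have hgap : 0 < |1 - s| := abs_pos.2 (sub_ne_zero.2 hs1.symm)
  have hsize : 1 + s ≤ 2 + |1 - s| := by linarith [neg_abs_le (1 - s)]
  have hinv : 1 / relGap s = (1 + s) / |1 - s| := by rw [relGap, one_div_div]
  have hpos : 0 < (1 + s) / |1 - s| := by positivity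
  rw [hinv]
  rcases le_total |1 - s| 1 with hnear | hfar
  · calc Real.log ((1 + s) / |1 - s|) ≤ Real.log (3 * (1 / |1 - s|)) := by
          refine Real.log_le_log hpos ?_
          rw [mul_one_div]
          gcongr
          linarith
      _ = Real.log 3 + Real.log (1 / |1 - s|) := Real.log_mul three_ne_zero (by positivity)
      _ ≤ Real.log 3 + max 0 (Real.log (1 / |1 - s|)) := by gcongr; exact le_max_right _ _
  · calc Real.log ((1 + s) / |1 - s|) ≤ Real.log 3 :=
          Real.log_le_log hpos ((div_le_iff₀ hgap).2 (by linarith))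
      _ ≤ Real.log 3 + max 0 (Real.log (1 / |1 - s|)) := le_add_of_nonneg_right (le_max_left _ _)

theorem rieszProfile_zero_relGap_comparableOn {γ : ℝ} (hγ : 0 ≤ γ) :
    ComparableOn {s : ℝ | 0 ≤ s ∧ s ≠ 1} (fun s => rieszProfile γ 0 (relGap s))
      (fun s => ENNReal.ofReal (1 + γ * max 0 (Real.log (1 / |1 - s|)))) := by
  have hlog3 : 0 ≤ Real.log 3 := Real.log_nonneg (by norm_num)
  refine ⟨1, 1 + γ * Real.log 3, one_pos, by positivity, fun s ⟨hs, hs1⟩ => ?_⟩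
  dsimp only
  rw [rieszProfile_zero hγ ⟨relGap_pos hs hs1, (relGap_mem_Icc hs).2⟩,
    ENNReal.ofReal_one, one_mul, ← ENNReal.ofReal_mul (by positivity)]
  set M := max 0 (Real.log (1 / |1 - s|))
  have hM : 0 ≤ M := le_max_left _ _
  constructor <;> apply ENNReal.ofReal_le_ofReal
  · gcongr
    exact max_zero_log_le_log_inv_relGap hs hs1
  · calc 1 + γ * Real.log (1 / relGap s) ≤ 1 + γ * (Real.log 3 + M) := by
          gcongr; exact log_inv_relGap_le hs hs1
      _ ≤ (1 + γ * Real.log 3) * (1 + γ * M) := by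
        nlinarith [mul_nonneg (mul_nonneg hγ hlog3) (mul_nonneg hγ hM)]

variable {E : Type*} [NormedAddCommGroup E] [NormedSpace ℝ E] [FiniteDimensional ℝ E]
  [MeasurableSpace E] [BorelSpace E] (μ : Measure E) [μ.IsAddHaarMeasure]

theorem sphereRieszPotential_comparableOn_of_one_lt {β : ℝ} (hβ : 1 < β) :
    ComparableOn {q : sphere (0 : E) 1 × ℝ | 0 ≤ q.2}
      (fun q => sphereRieszPotential μ β q.1 q.2)
      (fun q => ENNReal.ofReal ((1 + q.2) ^ (β - finrank ℝ E))) := by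
  have hprofile := rieszProfile_comparableOn_one (finrank ℝ E - β) (sub_pos.2 hβ)
  refine ((sphereRieszPotential_comparableOn μ β).trans <|
    (hprofile.comp (φ := fun q : sphere (0 : E) 1 × ℝ => relGap q.2)
      fun q hq => relGap_mem_Icc hq).mul_left _).trans (.of_eqOn fun q _ => ?_)
  simp

variable [Nontrivial E]

theorem sphereRieszPotential_comparableOn_of_lt_one {β : ℝ} (hβ : β < 1) :
    ComparableOn {q : sphere (0 : E) 1 × ℝ | 0 ≤ q.2 ∧ q.2 ≠ 1}
      (fun q => sphereRieszPotential μ β q.1 q.2)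
      (fun q => ENNReal.ofReal ((1 + q.2) ^ (1 - finrank ℝ E : ℝ) * |1 - q.2| ^ (β - 1))) := by
  have hn : (1 : ℝ) ≤ finrank ℝ E := by exact_mod_cast finrank_pos (R := ℝ) (M := E)
  have hprofile := rieszProfile_comparableOn_rpow (γ := finrank ℝ E - β) (b := β - 1)
    (by linarith) (by linarith)
  refine (((sphereRieszPotential_comparableOn μ β).comp (φ := id) fun q hq => hq.1).trans <|
    (hprofile.comp (φ := fun q : sphere (0 : E) 1 × ℝ => relGap q.2) fun q hq =>
      ⟨relGap_pos hq.1 hq.2, (relGap_mem_Icc hq.1).2⟩).mul_left _).trans (.of_eqOn ?_)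
  rintro ⟨e, s⟩ ⟨hs, -⟩
  dsimp only [id, Function.comp_apply] at hs ⊢
  have hs1 : 0 < 1 + s := by positivity
  rw [← ENNReal.ofReal_mul (by positivity), relGap,
    Real.div_rpow (abs_nonneg _) hs1.le, mul_div_assoc', mul_div_right_comm,
    ← Real.rpow_sub hs1, sub_sub_sub_cancel_left]

theorem sphereRieszPotential_comparableOn_of_eq_one :
    ComparableOn {q : sphere (0 : E) 1 × ℝ | 0 ≤ q.2 ∧ q.2 ≠ 1}
      (fun q => sphereRieszPotential μ 1 q.1 q.2)
      (fun q => ENNReal.ofReal ((1 + (finrank ℝ E - 1 : ℝ) * max 0 (Real.log (1 / |1 - q.2|))) *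
        (1 + q.2) ^ (1 - finrank ℝ E : ℝ))) := by
  set γ : ℝ := finrank ℝ E - 1
  have hγ : 0 ≤ γ := sub_nonneg.2 (by exact_mod_cast finrank_pos (R := ℝ) (M := E))
  have hlog := rieszProfile_zero_relGap_comparableOn hγ
  have hpotential := sphereRieszPotential_comparableOn μ 1
  rw [sub_self] at hpotential
  refine ((hpotential.comp (φ := id) fun q hq => hq.1).trans <|
    (hlog.comp (φ := fun q : sphere (0 : E) 1 × ℝ => q.2) fun q hq => hq).mul_left _).trans
    (.of_eqOn ?_)
  rintro ⟨e, s⟩ ⟨hs, -⟩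
  dsimp only [id, Function.comp_apply] at hs ⊢
  rw [← ENNReal.ofReal_mul (by positivity), mul_comm]

end Asymptotics

theorem stmt1_general {E : Type*} [NormedAddCommGroup E] [NormedSpace ℝ E] [FiniteDimensional ℝ E]
    [Nontrivial E] [MeasurableSpace E] [BorelSpace E] (μ : Measure E) [μ.IsAddHaarMeasure]
    (β : ℝ) :
    ∃ c C : ℝ, 0 < c ∧ 0 < C ∧ ∀ e : sphere (0 : E) 1,
      (β < 1 → ∀ s : ℝ, 0 ≤ s → s ≠ 1 →
        ENNReal.ofReal (c * (1 + s) ^ (1 - finrank ℝ E : ℝ) * |1 - s| ^ (β - 1))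
            ≤ sphereRieszPotential μ β e s ∧
        sphereRieszPotential μ β e s
            ≤ ENNReal.ofReal (C * (1 + s) ^ (1 - finrank ℝ E : ℝ) * |1 - s| ^ (β - 1))) ∧
      (β = 1 → ∀ s : ℝ, 0 ≤ s → s ≠ 1 →
        ENNReal.ofReal (c * (1 + (finrank ℝ E - 1 : ℝ) * max 0 (Real.log (1 / |1 - s|))) *
              (1 + s) ^ (1 - finrank ℝ E : ℝ)) ≤ sphereRieszPotential μ β e s ∧
        sphereRieszPotential μ β e s ≤
            ENNReal.ofReal (C * (1 + (finrank ℝ E - 1 : ℝ) * max 0 (Real.log (1 / |1 - s|))) *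
              (1 + s) ^ (1 - finrank ℝ E : ℝ))) ∧
      (1 < β → ∀ s : ℝ, 0 ≤ s →
        ENNReal.ofReal (c * (1 + s) ^ (β - finrank ℝ E)) ≤ sphereRieszPotential μ β e s ∧
        sphereRieszPotential μ β e s ≤ ENNReal.ofReal (C * (1 + s) ^ (β - finrank ℝ E))) := by
  rcases lt_trichotomy β 1 with hβ | rfl | hβ
  · obtain ⟨c, C, hc, hC, H⟩ := sphereRieszPotential_comparableOn_of_lt_one μ hβ
    refine ⟨c, C, hc, hC, fun e => ⟨fun _ s hs hs1 => ?_, fun h => absurd h hβ.ne,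
      fun h => absurd h hβ.not_gt⟩⟩
    simpa only [mul_assoc, ENNReal.ofReal_mul hc.le, ENNReal.ofReal_mul hC.le] using
      H (e, s) ⟨hs, hs1⟩
  · obtain ⟨c, C, hc, hC, H⟩ := sphereRieszPotential_comparableOn_of_eq_one μ
    refine ⟨c, C, hc, hC, fun e => ⟨fun h => absurd h (lt_irrefl _), fun _ s hs hs1 => ?_,
      fun h => absurd h (lt_irrefl _)⟩⟩
    simpa only [mul_assoc, ENNReal.ofReal_mul hc.le, ENNReal.ofReal_mul hC.le] using
      H (e, s) ⟨hs, hs1⟩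
  · obtain ⟨c, C, hc, hC, H⟩ := sphereRieszPotential_comparableOn_of_one_lt μ hβ
    refine ⟨c, C, hc, hC, fun e => ⟨fun h => absurd h hβ.not_gt, fun h => absurd h hβ.ne',
      fun _ s hs => ?_⟩⟩
    simpa only [ENNReal.ofReal_mul hc.le, ENNReal.ofReal_mul hC.le] using H (e, s) hs

theorem sphereIntegralF_eq_sphereRieszPotential {n : ℕ} (hn : 0 < n) (β s : ℝ) :
    sphereIntegralF n hn β s = sphereRieszPotential volume β
      ⟨EuclideanSpace.single (⟨0, hn⟩ : Fin n) (1 : ℝ), by simp⟩ s := by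
  simp only [sphereRieszPotential, finrank_euclideanSpace_fin]
  rfl

theorem stmt1 (n : ℕ) (hn : 0 < n) (β : ℝ) :
    ∃ c C : ℝ, 0 < c ∧ 0 < C ∧
      (β < 1 → ∀ s : ℝ, 0 < s → s ≠ 1 →
        ENNReal.ofReal (c * (1 + s) ^ ((1 : ℝ) - n) * |1 - s| ^ (β - 1))
            ≤ sphereIntegralF n hn β s ∧
        sphereIntegralF n hn β s
            ≤ ENNReal.ofReal (C * (1 + s) ^ ((1 : ℝ) - n) * |1 - s| ^ (β - 1))) ∧
      (β = 1 → ∀ s : ℝ, 0 < s → s ≠ 1 →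
        ENNReal.ofReal
            (c * (1 + ((n : ℝ) - 1) * max 0 (Real.log (1 / |1 - s|))) * (1 + s) ^ ((1 : ℝ) - n))
            ≤ sphereIntegralF n hn β s ∧
        sphereIntegralF n hn β s
            ≤ ENNReal.ofReal
              (C * (1 + ((n : ℝ) - 1) * max 0 (Real.log (1 / |1 - s|))) * (1 + s) ^ ((1 : ℝ) - n))) ∧
      (1 < β → ∀ s : ℝ, 0 < s →
        ENNReal.ofReal (c * (1 + s) ^ (β - n)) ≤ sphereIntegralF n hn β s ∧
        sphereIntegralF n hn β s ≤ ENNReal.ofReal (C * (1 + s) ^ (β - n))) := by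
  have : NeZero n := ⟨hn.ne'⟩
  obtain ⟨c, C, hc, hC, H⟩ := stmt1_general (volume : Measure (EuclideanSpace ℝ (Fin n))) β
  simp only [finrank_euclideanSpace_fin] at H
  simp only [sphereIntegralF_eq_sphereRieszPotential]
  exact ⟨c, C, hc, hC, fun hβ s hs => (H _).1 hβ s hs.le, fun hβ s hs => (H _).2.1 hβ s hs.le,
    fun hβ s hs => (H _).2.2 hβ s hs.le⟩
end

section
/- For every real β ≥ 0, every real α ≥ β − ⌊β⌋ (where ⌊β⌋ is the integer part of β), every n ∈ ℕ₀, and every x ∈ [−1,1], one has ((1+x)/2)^{β/2} |P_n^{(α,β)}(x)| ≤ C(n+α, n), where C(n+α, n) = (n+α)(n+α−1)⋯(α+1)/n! is the generalized binomial coefficient. In particular this holds whenever α, β ∈ ℕ₀. -/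
/-- Generalized binomial coefficient `C(t, j) = t(t-1)⋯(t-j+1)/j!`. -/
noncomputable def genChoose (t : ℝ) (j : ℕ) : ℝ :=
  (∏ i ∈ Finset.range j, (t - (i : ℝ))) / (Nat.factorial j : ℝ)

/-- Jacobi polynomial
`P_n^{(α,β)}(x) = ∑_{s=0}^n C(n+α, n-s) C(n+β, s) ((x-1)/2)^s ((x+1)/2)^{n-s}`. -/
noncomputable def jacobi (α β : ℝ) (n : ℕ) (x : ℝ) : ℝ :=
  ∑ s ∈ Finset.range (n + 1),
    genChoose ((n : ℝ) + α) (n - s) * genChoose ((n : ℝ) + β) s *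
      ((x - 1) / 2) ^ s * ((x + 1) / 2) ^ (n - s)

/-!
For `α = 0` write `p_n` for `P_n^{(0,β)}(1 - 2s)`. Its derivative `p_n^{(r)}` of integer order,
negative orders being antiderivatives that vanish at `0`, solves the Jacobi equation with parameters
`(r, β + r)`. Hence the Jacobi operator `L` with parameters `(0, 2β)` acts on the products
`p_n^{(r)} p_n^{(-r)}`, `|r| ≤ n`, by a tridiagonal matrix, which a positive diagonal weight
symmetrizes, and of these products only the one with `r = 0`, which is `p_n²`, does not vanish at
`0`. So the value of `q(L)² p_n²` at `0` is a diagonal entry of the square of a symmetrizable matrix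
and is nonnegative. Letting `q` isolate one eigenvalue of `L` shows that `p_n²` is a convex
combination of the polynomials `P_k^{(0,2β)}(1 - 2s)`.

Since `∫₀¹ (1 - s)^β p_n² ds = 1 / (β + 2n + 1) ≤ 1` for every `β ≥ 0`, convexity of even powers
then gives `∫₀¹ ((1 - s)^β p_n²)^(2^j) ds ≤ 1` by repeatedly doubling `β`, and so
`(1 - s)^β p_n² ≤ 1` pointwise. By homogeneity this bounds the form of degree `n` behind
`P_n^{(0,β)}` on the whole triangle `t, s ≥ 0`, `t + s ≤ 1`, and the form with parameter `α > 0` is,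
up to the factor `C(n+α, n)`, a beta average of the one with `α = 0` over that triangle.
-/

section Jacobi

open Polynomial Finset MeasureTheory

section GenChoose

theorem genChoose_eq_ringChoose (t : ℝ) (j : ℕ) : genChoose t j = Ring.choose t j := by
  rw [genChoose, Ring.choose_eq_smul, ← aeval_eq_smeval,
    ← eval_map_algebraMap, descPochhammer_map, descPochhammer_eval_eq_prod_range,
    smul_eq_mul, div_eq_inv_mul]

theorem genChoose_zero (t : ℝ) : genChoose t 0 = 1 := by
  rw [genChoose_eq_ringChoose, Ring.choose_zero_right]

theorem genChoose_natCast (n j : ℕ) : genChoose n j = n.choose j := by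
  rw [genChoose_eq_ringChoose, Ring.choose_natCast]

theorem genChoose_succ (t : ℝ) (j : ℕ) :
    (j + 1) * genChoose t (j + 1) = (t - j) * genChoose t j := by
  have : (j.factorial : ℝ) ≠ 0 := by positivity
  rw [genChoose, genChoose, Finset.prod_range_succ, Nat.factorial_succ]
  push_cast
  field_simp

theorem genChoose_pos {t : ℝ} {j : ℕ} (h : (j : ℝ) < t + 1) : 0 < genChoose t j := by
  refine div_pos (Finset.prod_pos fun i hi => ?_) (by positivity)
  have : (i : ℝ) + 1 ≤ j := by exact_mod_cast Finset.mem_range.mp hi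
  linarith

theorem genChoose_mul_genChoose (t : ℝ) (a b : ℕ) :
    genChoose t b * genChoose (t - b) a = (a + b).choose b * genChoose t (a + b) := by
  simp only [genChoose_eq_ringChoose]
  rw [← nsmul_eq_mul, Ring.choose_smul_choose t (Nat.le_add_left b a), Nat.add_sub_cancel]

end GenChoose

section JacobiForm

variable {A B : Type*} [CommRing A] [Algebra ℝ A] [CommRing B] [Algebra ℝ B]

/-- The homogenization of the Jacobi polynomial: the form of degree `n` in `t` and `s` with
`jacobiForm α β n ((1 + x) / 2) ((1 - x) / 2) = P_n^{(α,β)}(x)`. The variables lie in an arbitrary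
algebra so that polynomials may be substituted for them. -/
noncomputable def jacobiForm (α β : ℝ) (n : ℕ) (t s : A) : A :=
  ∑ ab ∈ antidiagonal n,
    ((-1) ^ ab.1 * genChoose (n + α) ab.2 * genChoose (n + β) ab.1) • (s ^ ab.1 * t ^ ab.2)

theorem jacobi_eq_jacobiForm (α β : ℝ) (n : ℕ) (x : ℝ) :
    jacobi α β n x = jacobiForm α β n ((1 + x) / 2) ((1 - x) / 2) := by
  rw [jacobi, jacobiForm, Finset.Nat.sum_antidiagonal_eq_sum_range_succ_mk]
  refine Finset.sum_congr rfl fun a _ => ?_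
  rw [show (x - 1) / 2 = (-1) * ((1 - x) / 2) by ring, mul_pow, add_comm x, smul_eq_mul]
  ring

theorem map_jacobiForm (f : A →ₐ[ℝ] B) (α β : ℝ) (n : ℕ) (t s : A) :
    f (jacobiForm α β n t s) = jacobiForm α β n (f t) (f s) := by
  simp only [jacobiForm, map_sum, map_smul, map_mul, map_pow]

theorem jacobiForm_mul_mul (α β : ℝ) (n : ℕ) (r t s : A) :
    jacobiForm α β n (r * t) (r * s) = r ^ n * jacobiForm α β n t s := by
  rw [jacobiForm, jacobiForm, Finset.mul_sum]
  refine Finset.sum_congr rfl fun ab hab => ?_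
  rw [mul_smul_comm, ← mem_antidiagonal.mp hab, mul_pow, mul_pow, pow_add]
  ring_nf

theorem jacobiForm_one_zero (α β : ℝ) (n : ℕ) :
    jacobiForm α β n (1 : ℝ) 0 = genChoose (n + α) n := by
  rw [jacobiForm, Finset.sum_eq_single (0, n)]
  · simp [genChoose_zero]
  · rintro ⟨a, b⟩ hab h
    have : a ≠ 0 := by rintro rfl; simp_all
    simp [this]
  · simp

end JacobiForm

section ShiftedJacobi

/-- The shifted Jacobi polynomial `P_n^{(α,β)}(1 - 2X)`, which lives on `[0, 1]` and has the
normalization point of the Jacobi polynomial at `0`. -/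
noncomputable def shiftedJacobi (α β : ℝ) (n : ℕ) : ℝ[X] :=
  jacobiForm α β n (1 - X) X

variable (α β : ℝ) (n : ℕ)

theorem eval_shiftedJacobi (s : ℝ) :
    (shiftedJacobi α β n).eval s = jacobiForm α β n (1 - s) s := by
  rw [← coe_aeval_eq_eval, shiftedJacobi]
  simp only [map_jacobiForm, map_sub, map_one, aeval_X]

theorem eval_zero_shiftedJacobi : (shiftedJacobi α β n).eval 0 = genChoose (n + α) n := by
  rw [eval_shiftedJacobi, sub_zero, jacobiForm_one_zero]

theorem eval_zero_shiftedJacobi_zero : (shiftedJacobi 0 β n).eval 0 = 1 := by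
  rw [eval_zero_shiftedJacobi, add_zero, genChoose_natCast, Nat.choose_self, Nat.cast_one]

theorem natDegree_X_pow_mul_one_sub_X_pow_le {R : Type*} [CommRing R] (a b : ℕ) :
    (X ^ a * (1 - X) ^ b : R[X]).natDegree ≤ a + b := by
  compute_degree

theorem natDegree_shiftedJacobi_le : (shiftedJacobi α β n).natDegree ≤ n := by
  rw [shiftedJacobi, jacobiForm]
  refine natDegree_sum_le_of_forall_le _ _ fun ab hab => ?_
  rw [← mem_antidiagonal.mp hab]
  exact (natDegree_smul_le _ _).trans (natDegree_X_pow_mul_one_sub_X_pow_le _ _)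

theorem coeff_X_pow_mul_one_sub_X_pow {R : Type*} [CommRing R] (a b : ℕ) :
    (X ^ a * (1 - X) ^ b : R[X]).coeff (a + b) = (-1) ^ b := by
  have hdeg : (1 - X : R[X]).natDegree ≤ 1 := by compute_degree
  have h := coeff_pow_of_natDegree_le (m := b) hdeg
  rw [mul_one] at h
  rw [add_comm, coeff_X_pow_mul, h]
  simp [coeff_one]

theorem coeff_shiftedJacobi :
    (shiftedJacobi α β n).coeff n = (-1) ^ n * genChoose (2 * n + α + β) n := by
  have vandermonde : genChoose (2 * n + α + β) n =
      ∑ ab ∈ antidiagonal n, genChoose (n + β) ab.1 * genChoose (n + α) ab.2 := by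
    rw [show 2 * n + α + β = n + β + (n + α) by ring]
    simp only [genChoose_eq_ringChoose]
    exact Ring.add_choose_eq n (mul_comm _ _)
  rw [vandermonde, shiftedJacobi, jacobiForm, finsetSum_coeff, Finset.mul_sum]
  refine Finset.sum_congr rfl fun ab hab => ?_
  rw [coeff_smul, ← mem_antidiagonal.mp hab, coeff_X_pow_mul_one_sub_X_pow, smul_eq_mul]
  ring

variable {α β}

theorem degree_shiftedJacobi (h : -2 < α + β) : (shiftedJacobi α β n).degree = n := by
  refine degree_eq_of_le_of_coeff_ne_zero
    (degree_le_of_natDegree_le (natDegree_shiftedJacobi_le α β n)) ?_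
  rw [coeff_shiftedJacobi]
  refine mul_ne_zero (pow_ne_zero _ (by norm_num)) ?_
  rcases n with _ | n
  · simp [genChoose_zero]
  · refine (genChoose_pos ?_).ne'
    push_cast
    linarith [(n.cast_nonneg : (0 : ℝ) ≤ n)]

/-- The shifted Jacobi polynomials as a polynomial sequence; its members of degree less than `k`
span the polynomials of degree less than `k`. -/
noncomputable def shiftedJacobiSequence (h : -2 < α + β) : Polynomial.Sequence ℝ where
  elems' := shiftedJacobi α β
  degree_eq' n := degree_shiftedJacobi n h

end ShiftedJacobi

section JacobiOperator

/-- The hypergeometric differential operator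
`y ↦ -(X (1 - X) y'' + (1 + α - (α + β + 2) X) y')`, which has the shifted Jacobi polynomials as
eigenvectors; the sign makes the eigenvalues grow. -/
noncomputable def jacobiOp (α β : ℝ) : Module.End ℝ ℝ[X] where
  toFun y := -(X * (1 - X) * derivative (derivative y) +
    (C (1 + α) - C (α + β + 2) * X) * derivative y)
  map_add' y z := by simp only [map_add]; ring
  map_smul' c y := by
    simp only [derivative_smul, mul_smul_comm, ← smul_add, smul_neg, RingHom.id_apply]

theorem jacobiOp_apply (α β : ℝ) (y : ℝ[X]) : jacobiOp α β y =
    -(X * (1 - X) * derivative (derivative y) +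
      (C (1 + α) - C (α + β + 2) * X) * derivative y) := rfl

theorem jacobiOp_X_pow_mul_one_sub_X_pow (α β : ℝ) (a b : ℕ) :
    jacobiOp α β (X ^ a * (1 - X) ^ b) =
      ((a + b) * (a + b + α + β + 1) : ℝ) • (X ^ a * (1 - X) ^ b) -
        ((a * (a + α) : ℝ) • (X ^ (a - 1) * (1 - X) ^ b) +
          (b * (b + β) : ℝ) • (X ^ a * (1 - X) ^ (b - 1))) := by
  have two : C (2 : ℝ) = (2 : ℝ[X]) := map_ofNat C 2
  rw [jacobiOp_apply]
  rcases a with _ | _ | a <;> rcases b with _ | _ | b <;>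
    simp only [derivative_pow, derivative_mul, derivative_one, derivative_X, derivative_natCast,
      two, smul_eq_C_mul, Nat.cast_add, Nat.cast_one, Nat.cast_zero, Nat.add_sub_cancel,
      Nat.zero_sub, zero_add, map_add, map_sub, map_mul, map_one, map_zero, map_natCast] <;> ring

theorem sum_antidiagonal_jacobi_lowered_eq_zero (α β : ℝ) (n : ℕ) :
    ∑ ab ∈ antidiagonal n, ((-1) ^ ab.1 * genChoose (n + α) ab.2 * genChoose (n + β) ab.1) •
      ((ab.1 * (ab.1 + α) : ℝ) • (X ^ (ab.1 - 1) * (1 - X) ^ ab.2) +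
        (ab.2 * (ab.2 + β) : ℝ) • (X ^ ab.1 * (1 - X) ^ (ab.2 - 1)) : ℝ[X]) = 0 := by
  rcases n with _ | n
  · simp
  simp only [smul_add, Finset.sum_add_distrib, smul_smul]
  rw [Finset.Nat.sum_antidiagonal_succ, Finset.Nat.sum_antidiagonal_succ' (n := n)]
  simp only [Nat.cast_zero, zero_mul, mul_zero, zero_smul, zero_add, Nat.add_sub_cancel,
    ← Finset.sum_add_distrib, ← add_smul]
  refine Finset.sum_eq_zero fun ab hab => smul_eq_zero_of_left ?_ _
  have hn : (n : ℝ) = ab.1 + ab.2 := by exact_mod_cast (mem_antidiagonal.mp hab).symm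
  have hα := genChoose_succ ((n + 1 : ℕ) + α) ab.2
  have hβ := genChoose_succ ((n + 1 : ℕ) + β) ab.1
  simp only [pow_succ]
  push_cast [hn] at hα hβ ⊢
  linear_combination (-1) ^ ab.1 * ((ab.2 + 1 + β) * genChoose (ab.1 + ab.2 + 1 + β) ab.1 * hα -
    (ab.1 + 1 + α) * genChoose (ab.1 + ab.2 + 1 + α) ab.2 * hβ)

theorem jacobiOp_shiftedJacobi (α β : ℝ) (n : ℕ) : jacobiOp α β (shiftedJacobi α β n) =
    (n * (n + (α + β + 1)) : ℝ) • shiftedJacobi α β n := by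
  conv_lhs => rw [shiftedJacobi, jacobiForm, map_sum]
  rw [← sub_zero (_ • shiftedJacobi α β n), ← sum_antidiagonal_jacobi_lowered_eq_zero α β n,
    shiftedJacobi, jacobiForm, Finset.smul_sum, ← Finset.sum_sub_distrib]
  refine Finset.sum_congr rfl fun ab hab => ?_
  have hn : (n : ℝ) = ab.1 + ab.2 := by exact_mod_cast (mem_antidiagonal.mp hab).symm
  rw [map_smul, jacobiOp_X_pow_mul_one_sub_X_pow, smul_sub, smul_comm, hn]
  simp only [add_assoc]

theorem derivative_jacobiOp (α β : ℝ) (y : ℝ[X]) : derivative (jacobiOp α β y) =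
    jacobiOp (α + 1) (β + 1) (derivative y) + (α + β + 2) • derivative y := by
  have : C (2 : ℝ) = (2 : ℝ[X]) := map_ofNat C 2
  simp only [jacobiOp_apply, smul_eq_C_mul, map_add, map_neg, map_sub, derivative_mul,
    derivative_X, derivative_one, derivative_C, this, map_one, derivative_ofNat]
  ring

theorem eval_zero_jacobiOp (α β : ℝ) (y : ℝ[X]) :
    (jacobiOp α β y).eval 0 = -((1 + α) * (derivative y).eval 0) := by
  simp [jacobiOp_apply]

theorem strictMono_natCast_mul_add {c : ℝ} (hc : -1 < c) :
    StrictMono fun k : ℕ => (k : ℝ) * (k + c) := by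
  refine strictMono_nat_of_lt_succ fun k => ?_
  have : (0 : ℝ) ≤ k := k.cast_nonneg
  push_cast
  nlinarith

end JacobiOperator

section IntDerivative

variable {K : Type*} [Field K]

theorem eq_of_derivative_eq_of_eval_zero_eq [CharZero K] {p q : K[X]}
    (hderiv : derivative p = derivative q) (heval : p.eval 0 = q.eval 0) : p = q := by
  have hconst := eq_C_of_derivative_eq_zero (p := p - q) (by rw [map_sub, hderiv, sub_self])
  rw [← sub_eq_zero, hconst, coeff_zero_eq_eval_zero, eval_sub, heval, sub_self, C_0]

/-- The antiderivative of a polynomial that vanishes at `0`. -/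
noncomputable def antideriv (p : K[X]) : K[X] :=
  p.sum fun i a => monomial (i + 1) (a / (i + 1))

theorem derivative_antideriv [CharZero K] (p : K[X]) : derivative (antideriv p) = p := by
  conv_rhs => rw [← p.sum_monomial_eq]
  rw [antideriv, Polynomial.sum, Polynomial.sum, derivative_sum]
  refine Finset.sum_congr rfl fun i _ => ?_
  rw [derivative_monomial, Nat.cast_succ, div_mul_cancel₀ _ (Nat.cast_add_one_ne_zero i),
    Nat.add_sub_cancel]

theorem eval_zero_antideriv (p : K[X]) : (antideriv p).eval 0 = 0 := by
  simp [antideriv, Polynomial.sum, eval_finsetSum]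

/-- The derivatives of all integer orders: order `r < 0` means the `-r`-fold antiderivative all of
whose successive integration constants vanish at `0`. -/
noncomputable def intDerivative (p : K[X]) : ℤ → K[X]
  | .ofNat r => derivative^[r] p
  | .negSucc r => antideriv^[r + 1] p

theorem intDerivative_zero (p : K[X]) : intDerivative p 0 = p := rfl

theorem derivative_intDerivative [CharZero K] (p : K[X]) (r : ℤ) :
    derivative (intDerivative p r) = intDerivative p (r + 1) := by
  rcases r with r | _ | r
  · exact (Function.iterate_succ_apply' _ _ _).symm
  · exact derivative_antideriv p
  · change derivative (antideriv^[r + 2] p) = antideriv^[r + 1] p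
    rw [Function.iterate_succ_apply', derivative_antideriv]

theorem eval_zero_intDerivative_of_neg (p : K[X]) {r : ℤ} (hr : r < 0) :
    (intDerivative p r).eval 0 = 0 := by
  obtain ⟨m, rfl⟩ := Int.eq_negSucc_of_lt_zero hr
  change (antideriv^[m + 1] p).eval 0 = 0
  rw [Function.iterate_succ_apply', eval_zero_antideriv]

theorem intDerivative_eq_zero {p : K[X]} {r : ℤ} (hr : p.natDegree < r) :
    intDerivative p r = 0 := by
  lift r to ℕ using by omega
  exact iterate_derivative_eq_zero (by exact_mod_cast hr)

theorem jacobiOp_intDerivative_shiftedJacobi (β : ℝ) (n : ℕ) (r : ℤ) :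
    jacobiOp r (β + r) (intDerivative (shiftedJacobi 0 β n) r) =
      ((n - r) * (n + r + β + 1) : ℝ) • intDerivative (shiftedJacobi 0 β n) r := by
  induction r using Int.induction_on with
  | zero =>
    rw [Int.cast_zero, add_zero, intDerivative_zero, jacobiOp_shiftedJacobi]
    congr 1
    ring
  | succ r ih =>
    have h := congrArg derivative ih
    rw [derivative_jacobiOp, derivative_smul, derivative_intDerivative, ← eq_sub_iff_add_eq,
      ← sub_smul] at h
    push_cast at h ⊢
    rw [← add_assoc, h]
    congr 1
    ring
  | pred r ih =>
    have hsucc : derivative (intDerivative (shiftedJacobi 0 β n) (-r - 1)) =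
        intDerivative (shiftedJacobi 0 β n) (-r) := by
      rw [derivative_intDerivative, sub_add_cancel]
    have hzero : (r : ℝ) * (intDerivative (shiftedJacobi 0 β n) (-r)).eval 0 = 0 := by
      rcases r.eq_zero_or_pos with rfl | hr
      · simp
      · rw [eval_zero_intDerivative_of_neg _ (by omega), mul_zero]
    refine eq_of_derivative_eq_of_eval_zero_eq ?_ ?_
    · rw [derivative_jacobiOp, derivative_smul, hsucc, ← eq_sub_iff_add_eq, ← sub_smul]
      push_cast at ih ⊢
      rw [sub_add_cancel, show β + (-r - 1) + 1 = β + -r by ring, ih]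
      congr 1
      ring
    · rw [eval_zero_jacobiOp, hsucc, eval_smul,
        eval_zero_intDerivative_of_neg _ (r := -r - 1) (by omega), smul_zero]
      push_cast
      linear_combination hzero

end IntDerivative

section SymmetrizableMatrix

variable {ι R V : Type*} [Fintype ι] [DecidableEq ι]

theorem represents_aeval [CommRing R] [AddCommGroup V] [Module R V] {v : ι → V}
    {A : Matrix ι ι R} {T : Module.End R V} (hT : A.Represents v T) (q : R[X]) :
    (aeval A q).Represents v (aeval T q) := by
  induction q using Polynomial.induction_on with
  | C a => simpa only [aeval_C] using Matrix.Represents.algebraMap a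
  | add p q hp hq => simpa only [map_add] using hp.add hq
  | monomial k a ih =>
    simpa only [pow_succ, ← mul_assoc, map_mul, aeval_X] using ih.mul hT

theorem isSymm_aeval_mul [CommRing R] {A D : Matrix ι ι R} (hD : D.IsSymm)
    (hA : (A * D).IsSymm) (q : R[X]) : (aeval A q * D).IsSymm := by
  simp only [Matrix.IsSymm, Matrix.transpose_mul, hD.eq] at hA ⊢
  induction q using Polynomial.induction_on with
  | C a =>
    rw [aeval_C, Matrix.algebraMap_eq_diagonal, Matrix.diagonal_transpose]
    exact (Algebra.commutes a D).symm
  | add p q hp hq => rw [map_add, Matrix.transpose_add, mul_add, add_mul, hp, hq]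
  | monomial k a ih =>
    rw [pow_succ, ← mul_assoc]
    generalize C a * X ^ k = p at ih ⊢
    calc D * (aeval A (p * X)).transpose
        = D * (aeval A p).transpose * A.transpose := by
          rw [mul_comm p, map_mul, aeval_X, Matrix.transpose_mul, mul_assoc]
      _ = aeval A p * (A * D) := by rw [ih, mul_assoc, hA]
      _ = aeval A (p * X) * D := by rw [map_mul, aeval_X, mul_assoc]

variable [Field R] [LinearOrder R] [IsStrictOrderedRing R]

theorem aeval_mul_self_apply_self_nonneg {A : Matrix ι ι R} {w : ι → R} (hw : ∀ i, 0 < w i)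
    (hA : (A * Matrix.diagonal w).IsSymm) (q : R[X]) (i : ι) : 0 ≤ aeval A (q * q) i i := by
  have hsymm := isSymm_aeval_mul (Matrix.isSymm_diagonal w) hA q
  rw [map_mul, Matrix.mul_apply]
  refine Finset.sum_nonneg fun j _ => ?_
  have hji : aeval A q j i = aeval A q i j * w j / w i := by
    rw [eq_div_iff (hw i).ne']
    simpa only [Matrix.mul_diagonal] using hsymm.apply i j
  rw [hji, mul_div_assoc, ← mul_assoc]
  exact mul_nonneg (mul_self_nonneg _) (div_pos (hw j) (hw i)).le

theorem apply_aeval_mul_self_nonneg [AddCommGroup V] [Module R V] {v : ι → V} {A : Matrix ι ι R}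
    {T : Module.End R V} (hT : A.Represents v T) {w : ι → R} (hw : ∀ i, 0 < w i)
    (hA : (A * Matrix.diagonal w).IsSymm) {φ : V →ₗ[R] R} {i₀ : ι}
    (hφ : ∀ i, φ (v i) = if i = i₀ then 1 else 0) (q : R[X]) : 0 ≤ φ (aeval T (q * q) (v i₀)) := by
  have hcomponent : φ (aeval T (q * q) (v i₀)) = aeval A (q * q) i₀ i₀ := by
    rw [← Matrix.represents_iff'.mp (represents_aeval hT (q * q)) i₀, map_sum]
    simp [hφ]
  exact hcomponent ▸ aeval_mul_self_apply_self_nonneg hw hA q i₀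

end SymmetrizableMatrix

section Ladder

theorem intDerivative_shiftedJacobi_three_term (β : ℝ) (n : ℕ) (r : ℤ) :
    X * (1 - X) * intDerivative (shiftedJacobi 0 β n) (r + 1) +
      (C (r : ℝ) - C (2 * r + β : ℝ) * X) * intDerivative (shiftedJacobi 0 β n) r +
      C ((n - r + 1) * (n + r + β) : ℝ) * intDerivative (shiftedJacobi 0 β n) (r - 1) = 0 := by
  have h := jacobiOp_intDerivative_shiftedJacobi β n (r - 1)
  rw [jacobiOp_apply, derivative_intDerivative, sub_add_cancel, derivative_intDerivative,
    smul_eq_C_mul] at h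
  push_cast at h
  ring_nf at h ⊢
  linear_combination -h

/-- The product of the derivatives of opposite orders `r` and `-r` of a Jacobi polynomial. These
products connect the square of the polynomial, which is the case `r = 0`, to the operator
`jacobiOp 0 (2 * β)`, which maps each of them into the span of itself and its two neighbours. -/
noncomputable def ladderProduct (β : ℝ) (n : ℕ) (r : ℤ) : ℝ[X] :=
  intDerivative (shiftedJacobi 0 β n) r * intDerivative (shiftedJacobi 0 β n) (-r)

variable (β : ℝ) (n : ℕ)

theorem ladderProduct_zero : ladderProduct β n 0 = shiftedJacobi 0 β n ^ 2 := by
  rw [ladderProduct, neg_zero, intDerivative_zero, sq]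

theorem ladderProduct_neg (r : ℤ) : ladderProduct β n (-r) = ladderProduct β n r := by
  rw [ladderProduct, ladderProduct, neg_neg, mul_comm]

theorem eval_zero_ladderProduct (r : ℤ) :
    (ladderProduct β n r).eval 0 = if r = 0 then 1 else 0 := by
  split_ifs with hr
  · rw [hr, ladderProduct_zero, eval_pow, eval_zero_shiftedJacobi_zero, one_pow]
  · rw [ladderProduct, eval_mul]
    rcases lt_or_gt_of_ne hr with h | h
    · rw [eval_zero_intDerivative_of_neg _ h, zero_mul]
    · rw [eval_zero_intDerivative_of_neg _ (neg_neg_of_pos h), mul_zero]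

theorem ladderProduct_eq_zero {r : ℤ} (hr : n < |r|) : ladderProduct β n r = 0 := by
  wlog h : 0 ≤ r generalizing r
  · rw [← ladderProduct_neg, this (by rwa [abs_neg]) (by omega)]
  rw [abs_of_nonneg h] at hr
  rw [ladderProduct, intDerivative_eq_zero, zero_mul]
  exact (Nat.cast_le.mpr (natDegree_shiftedJacobi_le 0 β n)).trans_lt hr

/-- The coefficient of `ladderProduct β n r` in its own image under `jacobiOp 0 (2 * β)`. -/
def ladderDiag (r : ℤ) : ℝ :=
  (n - r) * (n + r + β + 1) + (n + r) * (n - r + β + 1)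

/-- The coefficient of `ladderProduct β n (r + 1)` in the image of `ladderProduct β n r` under
`jacobiOp 0 (2 * β)`. -/
def ladderUp (r : ℤ) : ℝ :=
  (n + r + 1) * (n - r + β)

theorem jacobiOp_ladderProduct (r : ℤ) : jacobiOp 0 (2 * β) (ladderProduct β n r) =
    ladderDiag β n r • ladderProduct β n r + ladderUp β n r • ladderProduct β n (r + 1) +
      ladderUp β n (-r) • ladderProduct β n (r - 1) := by
  have two : C (2 : ℝ) = (2 : ℝ[X]) := map_ofNat C 2
  have h₁ := intDerivative_shiftedJacobi_three_term β n r
  have h₂ := intDerivative_shiftedJacobi_three_term β n (r + 1)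
  have h₃ := intDerivative_shiftedJacobi_three_term β n (-r)
  have h₄ := intDerivative_shiftedJacobi_three_term β n (-r + 1)
  simp only [ladderProduct, jacobiOp_apply, derivative_mul, derivative_add,
    derivative_intDerivative, ladderDiag, ladderUp, smul_eq_C_mul, neg_add, neg_sub',
    add_sub_cancel_right, sub_neg_eq_add, ← sub_eq_add_neg] at h₁ h₂ h₃ h₄ ⊢
  generalize intDerivative (shiftedJacobi 0 β n) = y at h₁ h₂ h₃ h₄ ⊢
  push_cast at h₁ h₂ h₃ h₄ ⊢
  simp only [map_add, map_sub, map_mul, map_neg, map_zero, map_one, two] at h₁ h₂ h₃ h₄ ⊢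
  linear_combination -y (-r) * h₂ - y r * h₄ - y (-r + 1) * h₁ - y (r + 1) * h₃

end Ladder

section LadderMatrix

/-- The action of `jacobiOp 0 (2 * β)` on the ladder products of orders in `[-n, n]`, as a
tridiagonal matrix. -/
noncomputable def ladderMatrix (β : ℝ) (n : ℕ) : Matrix (Icc (-n : ℤ) n) (Icc (-n : ℤ) n) ℝ :=
  fun i j => (if i.1 = j then ladderDiag β n j else 0) +
    (if i.1 = j + 1 then ladderUp β n j else 0) + (if i.1 = j - 1 then ladderUp β n (-j) else 0)

theorem ladderMatrix_represents (β : ℝ) (n : ℕ) :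
    (ladderMatrix β n).Represents (fun i : Icc (-n : ℤ) n => ladderProduct β n i)
      (jacobiOp 0 (2 * β)) := by
  have sum_single (k : ℤ) (c : ℝ) :
      ∑ i : Icc (-n : ℤ) n, (if i.1 = k then c else 0) • ladderProduct β n i =
        c • ladderProduct β n k := by
    rw [Finset.sum_coe_sort (Icc (-n : ℤ) n)
      fun i => (if i = k then c else 0) • ladderProduct β n i]
    simp only [ite_smul, zero_smul, Finset.sum_ite_eq', mem_Icc, ← abs_le]
    split_ifs with hk
    · rfl
    · rw [ladderProduct_eq_zero β n (not_le.mp hk), smul_zero]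
  refine Matrix.represents_iff'.mpr fun j => ?_
  simp only [ladderMatrix, add_smul, Finset.sum_add_distrib, sum_single, jacobiOp_ladderProduct]

/-- The quotient `Γ(m + 1) / Γ(m + β + 1)`, the building block of the symmetrizing weight. -/
noncomputable def gammaRatio (β m : ℝ) : ℝ :=
  Real.Gamma (m + 1) / Real.Gamma (m + β + 1)

theorem gammaRatio_pos {β m : ℝ} (hm : -1 < m) (hβm : -1 < m + β) : 0 < gammaRatio β m :=
  div_pos (Real.Gamma_pos_of_pos (by linarith)) (Real.Gamma_pos_of_pos (by linarith))

theorem gammaRatio_add_one {β m : ℝ} (hm : -1 < m) (hβm : -1 < m + β) :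
    (m + β + 1) * gammaRatio β (m + 1) = (m + 1) * gammaRatio β m := by
  have hm' : m + 1 ≠ 0 := by linarith
  have hβm' : m + β + 1 ≠ 0 := by linarith
  rw [gammaRatio, gammaRatio, Real.Gamma_add_one hm', add_right_comm m 1 β,
    Real.Gamma_add_one hβm', mul_div_assoc', mul_div_mul_left _ _ hβm', mul_div_assoc]

/-- The diagonal weight that symmetrizes `ladderMatrix`. -/
noncomputable def ladderWeight (β : ℝ) (n : ℕ) (r : ℤ) : ℝ :=
  gammaRatio β (n + r) * gammaRatio β (n - r)

theorem ladderWeight_pos {β : ℝ} (hβ : -1 < β) {n : ℕ} {r : ℤ} (hr : r ∈ Icc (-n : ℤ) n) :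
    0 < ladderWeight β n r := by
  have hleft : (0 : ℝ) ≤ n + r := by exact_mod_cast (by linarith [(mem_Icc.mp hr).1] : 0 ≤ n + r)
  have hright : (0 : ℝ) ≤ n - r := by exact_mod_cast sub_nonneg.mpr (mem_Icc.mp hr).2
  exact mul_pos (gammaRatio_pos (by linarith) (by linarith))
    (gammaRatio_pos (by linarith) (by linarith))

theorem ladderUp_mul_ladderWeight {β : ℝ} (hβ : -1 < β) {n : ℕ} {r : ℤ} (hr : -n ≤ r)
    (hr' : r < n) : ladderUp β n r * ladderWeight β n r =
      ladderUp β n (-(r + 1)) * ladderWeight β n (r + 1) := by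
  have hleft : (0 : ℝ) ≤ n + r := by exact_mod_cast neg_le_iff_add_nonneg'.mp hr
  have hright : (0 : ℝ) ≤ n - (r + 1) := by exact_mod_cast sub_nonneg.mpr (Int.add_one_le_of_lt hr')
  have h₁ := gammaRatio_add_one (β := β) (m := n + r) (by linarith) (by linarith)
  have h₂ := gammaRatio_add_one (β := β) (m := n - (r + 1)) (by linarith) (by linarith)
  rw [sub_add_eq_sub_sub, sub_add_cancel] at h₂
  simp only [ladderUp, ladderWeight]
  push_cast
  rw [sub_add_eq_sub_sub, ← add_assoc]
  linear_combination (n + r + 1) * gammaRatio β (n + r) * h₂ -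
    (n - r) * gammaRatio β (n - r - 1) * h₁

theorem isSymm_ladderMatrix_mul_diagonal {β : ℝ} (hβ : -1 < β) (n : ℕ) :
    (ladderMatrix β n * Matrix.diagonal fun i : Icc (-n : ℤ) n => ladderWeight β n i).IsSymm := by
  refine Matrix.IsSymm.ext fun i j => ?_
  wlog h : i.1 ≤ j generalizing i j
  · exact (this j i (le_of_not_ge h)).symm
  simp only [Matrix.mul_diagonal, ladderMatrix]
  rcases h.eq_or_lt with h | h
  · rw [h]
  rw [if_neg h.ne', if_neg h.ne, if_neg (c := j.1 = i - 1) (by omega),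
    if_neg (c := i.1 = j + 1) (by omega), zero_add, add_zero, zero_add, zero_add]
  by_cases hij : j.1 = i + 1
  · rw [if_pos hij, if_pos (by omega), hij]
    exact ladderUp_mul_ladderWeight hβ (mem_Icc.mp i.2).1 (h.trans_le (mem_Icc.mp j.2).2)
  · rw [if_neg hij, if_neg (by omega), zero_mul, zero_mul]

theorem eval_zero_aeval_jacobiOp_nonneg {β : ℝ} (hβ : -1 < β) (n : ℕ) (q : ℝ[X]) :
    0 ≤ (aeval (jacobiOp 0 (2 * β)) (q * q) (shiftedJacobi 0 β n ^ 2)).eval 0 := by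
  rw [← ladderProduct_zero]
  exact apply_aeval_mul_self_nonneg (φ := leval 0) (ladderMatrix_represents β n)
    (i₀ := ⟨0, by simp⟩)
    (fun i => ladderWeight_pos hβ i.2) (isSymm_ladderMatrix_mul_diagonal hβ n)
    (fun i => by simp [Subtype.ext_iff, eval_zero_ladderProduct]) q

end LadderMatrix

section ConvexHull

theorem mem_convexHull_range_of_apply_aeval_mul_self_nonneg {ι R V : Type*} [Field R]
    [LinearOrder R] [IsStrictOrderedRing R] [AddCommGroup V] [Module R V] {T : Module.End R V}
    {P : ι → V} {μ : ι → R} (hμ : Function.Injective μ) (hP : ∀ k, T (P k) = μ k • P k)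
    {φ : V →ₗ[R] R} (hφ : ∀ k, φ (P k) = 1) {x : V} (hx : x ∈ Submodule.span R (Set.range P))
    (hφx : φ x = 1) (hpos : ∀ q : R[X], 0 ≤ φ (aeval T (q * q) x)) :
    x ∈ convexHull R (Set.range P) := by
  classical
  obtain ⟨c, rfl⟩ := (Finsupp.mem_span_range_iff_exists_finsupp).mp hx
  have haeval (q : R[X]) (k : ι) : aeval T q (P k) = q.eval (μ k) • P k :=
    Module.End.aeval_apply_of_hasEigenvector
      ⟨Module.End.mem_eigenspace_iff.mpr (hP k), fun h => by simpa [h] using hφ k⟩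
  have hcoeff (q : R[X]) : φ (aeval T q (c.sum fun k a => a • P k)) =
      c.sum fun k a => a * q.eval (μ k) := by
    simp only [Finsupp.sum, map_sum, map_smul, haeval, hφ, smul_eq_mul, mul_one]
  refine (convex_convexHull R _).sum_mem (fun k hk => ?_) ?_
    fun k _ => subset_convexHull R _ (Set.mem_range_self k)
  · -- Evaluated on `c`, the square of a Lagrange basis polynomial isolates a single coefficient.
    have h := hpos (Lagrange.basis c.support μ k)
    rw [hcoeff, Finsupp.sum, Finset.sum_eq_single_of_mem k hk fun j hj hjk => by
      rw [eval_mul, Lagrange.eval_basis_of_ne hjk.symm hj, zero_mul, mul_zero]] at h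
    rwa [eval_mul, Lagrange.eval_basis_self hμ.injOn hk, mul_one, mul_one] at h
  · simpa only [Finsupp.sum, map_sum, map_smul, hφ, smul_eq_mul, mul_one] using hφx

theorem span_range_shiftedJacobi {α β : ℝ} (h : -2 < α + β) :
    Submodule.span ℝ (Set.range (shiftedJacobi α β)) = ⊤ :=
  (shiftedJacobiSequence h).span fun i =>
    (leadingCoeff_ne_zero.mpr ((shiftedJacobiSequence h).ne_zero i)).isUnit

theorem shiftedJacobi_sq_mem_convexHull {β : ℝ} (hβ : -1 < β) (n : ℕ) :
    shiftedJacobi 0 β n ^ 2 ∈ convexHull ℝ (Set.range (shiftedJacobi 0 (2 * β))) := by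
  refine mem_convexHull_range_of_apply_aeval_mul_self_nonneg
    (μ := fun k : ℕ => (k * (k + (0 + 2 * β + 1)) : ℝ)) (φ := leval 0)
    (strictMono_natCast_mul_add (by linarith)).injective (jacobiOp_shiftedJacobi 0 (2 * β))
    (eval_zero_shiftedJacobi_zero (2 * β)) ?_ ?_ (eval_zero_aeval_jacobiOp_nonneg hβ n)
  · rw [span_range_shiftedJacobi (by linarith)]
    exact Submodule.mem_top
  · rw [leval_apply, eval_pow, eval_zero_shiftedJacobi_zero, one_pow]

end ConvexHull

section WeightIntegral

variable {B : ℝ}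

theorem intervalIntegrable_one_sub_rpow_mul_eval (hB : -1 < B) (q : ℝ[X]) :
    IntervalIntegrable (fun s : ℝ => (1 - s) ^ B * q.eval s) volume 0 1 := by
  have h := (intervalIntegral.intervalIntegrable_rpow' (a := 1) (b := 0) hB).comp_sub_left 1
  rw [sub_self, sub_zero] at h
  exact h.mul_continuousOn q.continuousOn

/-- Integration against the Jacobi weight `(1 - s) ^ B` on `[0, 1]`, for which the polynomials
`shiftedJacobi 0 B k` are orthogonal. -/
noncomputable def weightIntegral (hB : -1 < B) : ℝ[X] →ₗ[ℝ] ℝ where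
  toFun q := ∫ s in (0 : ℝ)..1, (1 - s) ^ B * q.eval s
  map_add' p q := by
    simp only [eval_add, mul_add]
    exact intervalIntegral.integral_add (intervalIntegrable_one_sub_rpow_mul_eval hB p)
      (intervalIntegrable_one_sub_rpow_mul_eval hB q)
  map_smul' c q := by
    simp only [eval_smul, smul_eq_mul, RingHom.id_apply, mul_left_comm _ c,
      intervalIntegral.integral_const_mul]

theorem weightIntegral_apply (hB : -1 < B) (q : ℝ[X]) :
    weightIntegral hB q = ∫ s in (0 : ℝ)..1, (1 - s) ^ B * q.eval s := rfl

theorem weightIntegral_mono (hB : -1 < B) {p q : ℝ[X]}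
    (hpq : ∀ s ∈ Set.Icc (0 : ℝ) 1, p.eval s ≤ q.eval s) :
    weightIntegral hB p ≤ weightIntegral hB q :=
  intervalIntegral.integral_mono_on zero_le_one (intervalIntegrable_one_sub_rpow_mul_eval hB p)
    (intervalIntegrable_one_sub_rpow_mul_eval hB q) fun s hs =>
      mul_le_mul_of_nonneg_left (hpq s hs) (Real.rpow_nonneg (sub_nonneg.mpr hs.2) B)

theorem convexOn_weightIntegral_pow (hB : -1 < B) {m : ℕ} (hm : Even m) :
    ConvexOn ℝ Set.univ fun q : ℝ[X] => weightIntegral hB (q ^ m) := by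
  refine ⟨convex_univ, fun p _ q _ a b ha hb hab => ?_⟩
  dsimp only
  rw [← map_smul, ← map_smul, ← map_add]
  refine weightIntegral_mono hB fun s _ => ?_
  simp only [eval_pow, eval_add, eval_smul]
  exact hm.convexOn_pow.2 (Set.mem_univ _) (Set.mem_univ _) ha hb hab

theorem weightIntegral_by_parts (hB : -1 < B) (q : ℝ[X]) :
    weightIntegral hB ((B + 1) • q - (1 - X) * derivative q) = q.eval 0 := by
  have hderiv : ∀ s ∈ Set.Ioo (0 : ℝ) 1, HasDerivAt (fun s : ℝ => -((1 - s) ^ (B + 1) * q.eval s))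
      ((1 - s) ^ B * ((B + 1) • q - (1 - X) * derivative q).eval s) s := by
    intro s hs
    have hpos : 0 < 1 - s := sub_pos.mpr hs.2
    have hpow := ((hasDerivAt_id s).const_sub 1).rpow_const (p := B + 1) (Or.inl hpos.ne')
    refine (hpow.mul (q.hasDerivAt s)).neg.congr_deriv ?_
    simp only [eval_sub, eval_smul, eval_mul, eval_one, eval_X, add_sub_cancel_right, smul_eq_mul,
      id_eq, Real.rpow_add_one hpos.ne']
    ring
  have hcont : Continuous fun s : ℝ => -((1 - s) ^ (B + 1) * q.eval s) :=
    (((continuous_const.sub continuous_id).rpow_const fun _ => Or.inr (by linarith)).mul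
      q.continuous).neg
  rw [weightIntegral_apply, intervalIntegral.integral_eq_sub_of_hasDerivAt_of_le zero_le_one
    hcont.continuousOn hderiv (intervalIntegrable_one_sub_rpow_mul_eval hB _), sub_self,
    Real.zero_rpow (by linarith)]
  simp

theorem weightIntegral_jacobiOp_symm (hB : -1 < B) (y z : ℝ[X]) :
    weightIntegral hB (z * jacobiOp 0 B y) = weightIntegral hB (y * jacobiOp 0 B z) := by
  have two : C (2 : ℝ) = (2 : ℝ[X]) := map_ofNat C 2
  have h := weightIntegral_by_parts hB (X * (z * derivative y - y * derivative z))
  rw [eval_mul, eval_X, zero_mul] at h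
  rw [← sub_eq_zero, ← map_sub]
  refine Eq.trans (congrArg _ ?_) h
  simp only [jacobiOp_apply, derivative_mul, derivative_X, map_add, map_sub, map_one, map_zero,
    two, smul_eq_C_mul]
  ring

theorem weightIntegral_shiftedJacobi_mul_shiftedJacobi (hB : -1 < B) {j k : ℕ} (hjk : j ≠ k) :
    weightIntegral hB (shiftedJacobi 0 B k * shiftedJacobi 0 B j) = 0 := by
  have h := weightIntegral_jacobiOp_symm hB (shiftedJacobi 0 B j) (shiftedJacobi 0 B k)
  rw [jacobiOp_shiftedJacobi, jacobiOp_shiftedJacobi, mul_smul_comm, mul_smul_comm, map_smul,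
    map_smul, mul_comm (shiftedJacobi 0 B j), smul_eq_mul, smul_eq_mul] at h
  by_contra h0
  exact hjk ((strictMono_natCast_mul_add (by linarith)).injective (mul_right_cancel₀ h0 h))

theorem weightIntegral_shiftedJacobi_mul_of_degree_lt (hB : -1 < B) {k : ℕ} {q : ℝ[X]}
    (hq : q.degree < k) : weightIntegral hB (shiftedJacobi 0 B k * q) = 0 := by
  let S := shiftedJacobiSequence (α := 0) (β := B) (by linarith)
  have hspan := S.span_degreeLT (m := k) fun i _ =>
    (leadingCoeff_ne_zero.mpr (S.ne_zero i)).isUnit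
  have hker : Submodule.span ℝ (S '' Set.Iio k) ≤
      LinearMap.ker (weightIntegral hB ∘ₗ LinearMap.mulLeft ℝ (shiftedJacobi 0 B k)) := by
    rw [Submodule.span_le]
    rintro _ ⟨j, hj, rfl⟩
    exact weightIntegral_shiftedJacobi_mul_shiftedJacobi hB (Set.mem_Iio.mp hj).ne
  exact hker (hspan ▸ mem_degreeLT.mpr hq)

theorem degree_one_sub_X_mul_derivative_add_lt {R : Type*} [CommRing R] {p : R[X]} {k : ℕ}
    (hp : p.natDegree ≤ k) : ((1 - X) * derivative p + (k : R) • p).degree < (k : WithBot ℕ) := by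
  rw [degree_lt_iff_coeff_zero]
  intro m hm
  have hlead : ((k : R) - m) * p.coeff m = 0 := by
    rcases hm.eq_or_lt with rfl | hm
    · simp
    · rw [coeff_eq_zero_of_natDegree_lt (hp.trans_lt hm), mul_zero]
  rw [sub_mul, one_mul, coeff_add, coeff_sub, coeff_smul, coeff_derivative,
    coeff_eq_zero_of_natDegree_lt (hp.trans_lt (Nat.lt_succ_of_le hm)), zero_mul, smul_eq_mul]
  rcases m with _ | m
  · simpa using hlead
  · rw [coeff_X_mul, coeff_derivative]
    push_cast at hlead
    linear_combination hlead

theorem weightIntegral_shiftedJacobi_sq (hB : -1 < B) (k : ℕ) :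
    (B + 1 + 2 * k) * weightIntegral hB (shiftedJacobi 0 B k ^ 2) = 1 := by
  have horth := weightIntegral_shiftedJacobi_mul_of_degree_lt hB
    (degree_one_sub_X_mul_derivative_add_lt (natDegree_shiftedJacobi_le 0 B k))
  have hparts := weightIntegral_by_parts hB (shiftedJacobi 0 B k ^ 2)
  rw [eval_pow, eval_zero_shiftedJacobi_zero, one_pow] at hparts
  have hsplit (p : ℝ[X]) : (B + 1) • p ^ 2 - (1 - X) * derivative (p ^ 2) =
      (B + 1 + 2 * k) • p ^ 2 -
        (2 : ℝ) • (p * ((1 - X) * derivative p + (k : ℝ) • p)) := by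
    have two : C (2 : ℝ) = (2 : ℝ[X]) := map_ofNat C 2
    simp only [smul_eq_C_mul, sq, derivative_mul, map_add, map_mul, map_one, two]
    ring
  rwa [hsplit, map_sub, map_smul, map_smul, horth, smul_zero, sub_zero, smul_eq_mul] at hparts

theorem weightIntegral_shiftedJacobi_pow_le_one {β : ℝ} (hβ : 0 ≤ β) (n j : ℕ) (hB : -1 < B)
    (h : B = 2 ^ j * β) : weightIntegral hB (shiftedJacobi 0 β n ^ 2 ^ (j + 1)) ≤ 1 := by
  induction j generalizing β n with
  | zero =>
    obtain rfl : B = β := by rw [h, pow_zero, one_mul]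
    have hsq := weightIntegral_shiftedJacobi_sq hB n
    have hden : 1 ≤ B + 1 + 2 * n := by linarith [n.cast_nonneg (α := ℝ)]
    rw [zero_add, pow_one, eq_one_div_of_mul_eq_one_right hsq]
    exact (div_le_one (by linarith)).mpr hden
  | succ j ih =>
    have hconvex :=
      convexOn_weightIntegral_pow hB (even_two.pow_of_ne_zero (Nat.succ_ne_zero j))
    obtain ⟨_, ⟨k, rfl⟩, hk⟩ := hconvex.exists_ge_of_mem_convexHull (Set.subset_univ _)
      (shiftedJacobi_sq_mem_convexHull (β := β) (by linarith) n)
    rw [pow_succ' 2 (j + 1), pow_mul]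
    exact hk.trans (ih (by positivity) k (by rw [h]; ring))

end WeightIntegral

section SupBound

theorem ae_lt_of_frequently_integral_pow_le {Ω : Type*} {_ : MeasurableSpace Ω}
    {μ : Measure Ω} {f : Ω → ℝ} {c M : ℝ} (hc : 1 < c) (hf : 0 ≤ᵐ[μ] f)
    (h : ∃ᶠ m in Filter.atTop,
      Integrable (fun x => f x ^ m) μ ∧ ∫ x, f x ^ m ∂μ ≤ M) :
    ∀ᵐ x ∂μ, f x < c := by
  have hc0 : 0 < c := zero_lt_one.trans hc
  have hmarkov : ∃ᶠ m in Filter.atTop, μ {x | c ≤ f x} ≠ ⊤ ∧ c ^ m * μ.real {x | c ≤ f x} ≤ M := by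
    refine h.mono fun m ⟨hint, hle⟩ => ?_
    have hsub : {x | c ≤ f x} ⊆ {x | c ^ m ≤ f x ^ m} := fun x hx => pow_le_pow_left₀ hc0.le hx m
    have hfin := (hint.measure_ge_lt_top (pow_pos hc0 m)).ne
    have hbound := mul_meas_ge_le_integral_of_nonneg
      (hf.mono fun x hx => pow_nonneg hx m) hint (c ^ m)
    refine ⟨measure_ne_top_of_subset hsub hfin, le_trans ?_ (hbound.trans hle)⟩
    exact mul_le_mul_of_nonneg_left (measureReal_mono hsub hfin) (by positivity)
  obtain ⟨-, hfin, -⟩ := hmarkov.exists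
  suffices hnull : μ {x | c ≤ f x} = 0 by simpa only [ae_iff, not_lt] using hnull
  by_contra hnull
  have hpos : 0 < μ.real {x | c ≤ f x} := ENNReal.toReal_pos hnull hfin
  have hgrow := ((tendsto_pow_atTop_atTop_of_one_lt hc).atTop_mul_const hpos).eventually_gt_atTop M
  obtain ⟨m, ⟨-, hle⟩, hgt⟩ := (hmarkov.and_eventually hgrow).exists
  exact hgt.not_ge hle

theorem ae_le_one_of_frequently_integral_pow_le {Ω : Type*} {_ : MeasurableSpace Ω}
    {μ : Measure Ω} {f : Ω → ℝ} {M : ℝ} (hf : 0 ≤ᵐ[μ] f)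
    (h : ∃ᶠ m in Filter.atTop,
      Integrable (fun x => f x ^ m) μ ∧ ∫ x, f x ^ m ∂μ ≤ M) :
    ∀ᵐ x ∂μ, f x ≤ 1 := by
  have hlt (k : ℕ) : ∀ᵐ x ∂μ, f x < 1 + 1 / ((k : ℝ) + 1) :=
    ae_lt_of_frequently_integral_pow_le (lt_add_of_pos_right 1 Nat.one_div_pos_of_nat) hf h
  filter_upwards [ae_all_iff.mpr hlt] with x hx
  have hlim := (tendsto_one_div_add_atTop_nhds_zero_nat (𝕜 := ℝ)).const_add 1
  rw [add_zero] at hlim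
  exact ge_of_tendsto' hlim fun k => (hx k).le

theorem le_one_of_frequently_integral_pow_le {a b M : ℝ} (hab : a < b) {g : ℝ → ℝ}
    (hg : ContinuousOn g (Set.Icc a b)) (hg0 : ∀ x ∈ Set.Icc a b, 0 ≤ g x)
    (h : ∃ᶠ m in Filter.atTop, ∫ x in a..b, g x ^ m ≤ M) {x : ℝ} (hx : x ∈ Set.Icc a b) :
    g x ≤ 1 := by
  have hae : ∀ᵐ x ∂volume.restrict (Set.Icc a b), g x ≤ 1 := by
    refine ae_le_one_of_frequently_integral_pow_le (M := M)
      (ae_restrict_of_forall_mem measurableSet_Icc hg0) (h.mono fun m hm => ?_)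
    rw [intervalIntegral.integral_of_le hab.le, ← integral_Icc_eq_integral_Ioc] at hm
    exact ⟨(hg.pow m).integrableOn_Icc, hm⟩
  have hmax := Measure.eqOn_Icc_of_ae_eq volume hab.ne
    (hae.mono fun x hx => sup_eq_right.mpr hx) (hg.sup continuousOn_const) continuousOn_const
  exact sup_eq_right.mp (hmax hx)

theorem rpow_mul_abs_eval_shiftedJacobi_le_one {β : ℝ} (hβ : 0 ≤ β) (n : ℕ) {s : ℝ}
    (hs : s ∈ Set.Icc (0 : ℝ) 1) : (1 - s) ^ (β / 2) * |(shiftedJacobi 0 β n).eval s| ≤ 1 := by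
  let g : ℝ → ℝ := fun s => (1 - s) ^ β * (shiftedJacobi 0 β n).eval s ^ 2
  have hint (j : ℕ) : ∫ s in (0 : ℝ)..1, g s ^ 2 ^ j ≤ 1 := by
    have hB : 0 ≤ 2 ^ j * β := by positivity
    refine le_of_eq_of_le (intervalIntegral.integral_congr fun s hs => ?_)
      (weightIntegral_shiftedJacobi_pow_le_one hβ n j (by linarith) rfl)
    rw [Set.uIcc_of_le zero_le_one] at hs
    have hs1 : 0 ≤ 1 - s := sub_nonneg.mpr hs.2
    simp only [g, eval_pow]
    rw [mul_pow, ← pow_mul, ← pow_succ', mul_comm _ β, Real.rpow_mul hs1]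
    norm_cast
  have hfreq : ∃ᶠ m in Filter.atTop, ∫ s in (0 : ℝ)..1, g s ^ m ≤ 1 :=
    Filter.frequently_atTop.mpr fun m => ⟨2 ^ m, Nat.lt_two_pow_self.le, hint m⟩
  have hcont : Continuous g :=
    ((continuous_const.sub continuous_id).rpow_const fun _ => Or.inr hβ).mul
      ((shiftedJacobi 0 β n).continuous.pow 2)
  have hs1 : 0 ≤ 1 - s := sub_nonneg.mpr hs.2
  refine (sq_le_one_iff₀ (by positivity)).mp ?_
  rw [mul_pow, sq_abs, ← Real.rpow_mul_natCast hs1, Nat.cast_two, div_mul_cancel₀ _ two_ne_zero]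
  refine le_one_of_frequently_integral_pow_le zero_lt_one hcont.continuousOn (fun s hs => ?_)
    hfreq hs
  exact mul_nonneg (Real.rpow_nonneg (sub_nonneg.mpr hs.2) β) (sq_nonneg _)

theorem rpow_mul_abs_jacobiForm_le_one {β : ℝ} (hβ : 0 ≤ β) (n : ℕ) {t s : ℝ} (ht : 0 ≤ t)
    (hs : 0 ≤ s) (hts : t + s ≤ 1) : t ^ (β / 2) * |jacobiForm 0 β n t s| ≤ 1 := by
  obtain ⟨r, u, hr, hu, rfl, rfl⟩ : ∃ r u : ℝ, r ∈ Set.Icc (0 : ℝ) 1 ∧ u ∈ Set.Icc (0 : ℝ) 1 ∧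
      t = r * (1 - u) ∧ s = r * u := by
    rcases (add_nonneg ht hs).eq_or_lt with h | h
    · exact ⟨0, 0, by simp, by simp, by linarith, by linarith⟩
    · refine ⟨t + s, s / (t + s), ⟨h.le, hts⟩, ⟨by positivity, ?_⟩, ?_, ?_⟩
      · rw [div_le_one h]; linarith
      · field_simp; ring
      · field_simp
  have hu1 : 0 ≤ 1 - u := sub_nonneg.mpr hu.2
  rw [jacobiForm_mul_mul, ← eval_shiftedJacobi, abs_mul, abs_pow, abs_of_nonneg hr.1,
    Real.mul_rpow hr.1 hu1, mul_mul_mul_comm]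
  exact mul_le_one₀
    (mul_le_one₀ (Real.rpow_le_one hr.1 hr.2 (by positivity)) (pow_nonneg hr.1 _)
      (pow_le_one₀ hr.1 hr.2))
    (mul_nonneg (Real.rpow_nonneg hu1 _) (abs_nonneg _))
    (rpow_mul_abs_eval_shiftedJacobi_le_one hβ n hu)

end SupBound

section BetaAverage

theorem integral_rpow_mul_one_sub_pow {α : ℝ} (hα : 0 < α) (j : ℕ) :
    ∫ v in (0 : ℝ)..1, v ^ (α - 1) * (1 - v) ^ j = (α * genChoose (j + α) j)⁻¹ := by
  have hbeta : ((∫ v in (0 : ℝ)..1, v ^ (α - 1) * (1 - v) ^ j : ℝ) : ℂ) =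
      Complex.betaIntegral α (j + 1) := by
    rw [← intervalIntegral.integral_ofReal, Complex.betaIntegral]
    refine intervalIntegral.integral_congr fun v hv => ?_
    rw [Set.uIcc_of_le zero_le_one] at hv
    simp only [Complex.ofReal_mul, Complex.ofReal_cpow hv.1, Complex.ofReal_pow,
      Complex.ofReal_sub, Complex.ofReal_one, add_sub_cancel_right, Complex.cpow_natCast]
  have hprod : ∏ i ∈ range (j + 1), (α + i) = α * ∏ i ∈ range j, (j + α - i) := by
    rw [prod_range_succ', Nat.cast_zero, add_zero, mul_comm, ← prod_range_reflect]
    congr 1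
    refine prod_congr rfl fun i hi => ?_
    have : i + 1 ≤ j := mem_range.mp hi
    rw [Nat.sub_sub, add_comm 1 i]
    push_cast [this]
    ring
  rw [Complex.betaIntegral_eval_nat_add_one_right (by simpa using hα)] at hbeta
  rw [genChoose, ← mul_div_assoc, ← hprod, inv_div]
  exact_mod_cast hbeta

theorem jacobiForm_eq_mul_integral {α : ℝ} (hα : 0 < α) (β : ℝ) (n : ℕ) (t s : ℝ) :
    jacobiForm α β n t s = genChoose (n + α) n *
      ∫ v in (0 : ℝ)..1, α * v ^ (α - 1) * jacobiForm 0 β n t (s * (1 - v)) := by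
  have hsum (v : ℝ) : α * v ^ (α - 1) * jacobiForm 0 β n t (s * (1 - v)) =
      ∑ ab ∈ antidiagonal n, (α * ((-1) ^ ab.1 * n.choose ab.2 * genChoose (n + β) ab.1 *
        (s ^ ab.1 * t ^ ab.2))) * (v ^ (α - 1) * (1 - v) ^ ab.1) := by
    rw [jacobiForm, Finset.mul_sum]
    refine Finset.sum_congr rfl fun ab _ => ?_
    rw [add_zero, genChoose_natCast, mul_pow, smul_eq_mul]
    ring
  simp only [hsum]
  rw [intervalIntegral.integral_finsetSum, jacobiForm, Finset.mul_sum]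
  · refine Finset.sum_congr rfl fun ⟨a, b⟩ hab => ?_
    obtain rfl : a + b = n := mem_antidiagonal.mp hab
    have hpos : 0 < genChoose (a + α) a := genChoose_pos (by linarith)
    have hmul := genChoose_mul_genChoose ((a + b : ℕ) + α) a b
    rw [show ((a + b : ℕ) : ℝ) + α - b = a + α by push_cast; ring] at hmul
    rw [intervalIntegral.integral_const_mul, integral_rpow_mul_one_sub_pow hα, smul_eq_mul,
      eq_div_of_mul_eq hpos.ne' hmul]
    field_simp
  · intro ab _
    exact ((intervalIntegral.intervalIntegrable_rpow' (by linarith)).mul_continuousOn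
      (by fun_prop)).const_mul _

theorem rpow_mul_abs_jacobiForm_le {α β : ℝ} (hα : 0 ≤ α) (hβ : 0 ≤ β) (n : ℕ) {t s : ℝ}
    (ht : 0 ≤ t) (hs : 0 ≤ s) (hts : t + s ≤ 1) :
    t ^ (β / 2) * |jacobiForm α β n t s| ≤ genChoose (n + α) n := by
  rcases hα.eq_or_lt with rfl | hα
  · rw [add_zero, genChoose_natCast, Nat.choose_self, Nat.cast_one]
    exact rpow_mul_abs_jacobiForm_le_one hβ n ht hs hts
  have hchoose : 0 < genChoose (n + α) n := genChoose_pos (by linarith)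
  rw [jacobiForm_eq_mul_integral hα, abs_mul, abs_of_pos hchoose, mul_left_comm]
  refine mul_le_of_le_one_right hchoose.le ?_
  have hdensity : IntervalIntegrable (fun v : ℝ => α * v ^ (α - 1)) volume 0 1 :=
    (intervalIntegral.intervalIntegrable_rpow' (by linarith)).const_mul α
  have hmass : ∫ v in (0 : ℝ)..1, α * v ^ (α - 1) = 1 := by
    rw [intervalIntegral.integral_const_mul, integral_rpow (Or.inl (by linarith))]
    simp [hα.ne']
  rw [← abs_of_nonneg (Real.rpow_nonneg ht (β / 2)), ← abs_mul,
    ← intervalIntegral.integral_const_mul, ← Real.norm_eq_abs]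
  refine (intervalIntegral.norm_integral_le_of_norm_le zero_le_one
    (Filter.Eventually.of_forall fun v hv => ?_) hdensity).trans_eq hmass
  have hv1 : 0 ≤ 1 - v := sub_nonneg.mpr hv.2
  have hsv : s * (1 - v) ≤ s := mul_le_of_le_one_right hs (by linarith [hv.1])
  have hweight : 0 ≤ α * v ^ (α - 1) := mul_nonneg hα.le (Real.rpow_nonneg hv.1.le _)
  rw [mul_left_comm, Real.norm_eq_abs, abs_mul, abs_of_nonneg hweight, abs_mul,
    abs_of_nonneg (Real.rpow_nonneg ht _)]
  exact mul_le_of_le_one_right hweight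
    (rpow_mul_abs_jacobiForm_le_one hβ n ht (mul_nonneg hs hv1) (by linarith))

end BetaAverage

end Jacobi

theorem stmt5_general (β : ℝ) (hβ : 0 ≤ β) (α : ℝ) (hα : 0 ≤ α) (n : ℕ)
    (x : ℝ) (hx : x ∈ Set.Icc (-1 : ℝ) 1) :
    ((1 + x) / 2) ^ (β / 2) * |jacobi α β n x| ≤ genChoose ((n : ℝ) + α) n := by
  rw [jacobi_eq_jacobiForm]
  exact rpow_mul_abs_jacobiForm_le hα hβ n (by linarith [hx.1]) (by linarith [hx.2])
    (by linarith)

theorem stmt5 (β : ℝ) (hβ : 0 ≤ β) (α : ℝ) (hα : β - (⌊β⌋ : ℝ) ≤ α) (n : ℕ)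
    (x : ℝ) (hx : x ∈ Set.Icc (-1 : ℝ) 1) :
    ((1 + x) / 2) ^ (β / 2) * |jacobi α β n x| ≤ genChoose ((n : ℝ) + α) n :=
  stmt5_general β hβ α ((sub_nonneg.mpr (Int.floor_le β)).trans hα) n x hx
end
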